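/- arXiv:2603.13499 — 8 statements merged into one kernel-verified Lean document; each statement's English description precedes it below -/
import Mathlib

section
/- Let 0 < t_min ≤ 1 ≤ t_max and 0 < x_min ≤ 1 ≤ x_max. Let ℱ be the class of all functions x ↦ E_{t~H}[ t·exp(−t²x²/2) ] as H ranges over probability measures on [t_min, t_max]. Then there is a universal constant C > 0 such that for every ε ∈ (0,1/2), the ε-covering number of ℱ in the sup norm on [x_min, x_max] satisfies log N(ε, ℱ, L_∞([x_min,x_max])) ≤ C · log³( t_max x_max / (ε t_min x_min) ) · log⁴ log( t_max x_max / (ε t_min x_min) ). -/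
open MeasureTheory ProbabilityTheory
open scoped ENNReal NNReal

/-- The standard normal density `φ`. -/
noncomputable def stdNormalPDF (u : ℝ) : ℝ :=
  Real.exp (-u ^ 2 / 2) / Real.sqrt (2 * Real.pi)

/-- The normal scale mixture density `f_{μ,G}`. -/
noncomputable def mixDensity (μ : ℝ) (G : Measure ℝ) (x : ℝ) : ℝ :=
  ∫ σ, (1 / σ) * stdNormalPDF ((x - μ) / σ) ∂G

/-- The squared Hellinger distance between two densities on `ℝ`. -/
noncomputable def hellingerSq (p q : ℝ → ℝ) : ℝ :=
  ∫ x, (Real.sqrt (p x) - Real.sqrt (q x)) ^ 2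

/-- The Hellinger modulus of continuity `ω_{H²,G}(t)` of the location family generated
by `G`, valued in `ℝ≥0∞`. -/
noncomputable def modulusEnn (G : Measure ℝ) (t : ℝ) : ℝ≥0∞ :=
  ⨆ (μ₁ : ℝ) (μ₂ : ℝ) (_ : hellingerSq (mixDensity μ₁ G) (mixDensity μ₂ G) ≤ t),
    ENNReal.ofReal |μ₁ - μ₂|

/-- `G` is a probability measure supported in `[σmin, σmax]`. -/
def IsPriorOn (σmin σmax : ℝ) (G : Measure ℝ) : Prop :=
  IsProbabilityMeasure G ∧ G (Set.Icc σmin σmax)ᶜ = 0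

/-- The mixture log-likelihood of the data `X` at parameters `(μ, G)`. -/
noncomputable def logLik {n : ℕ} (X : Fin n → ℝ) (μ : ℝ) (G : Measure ℝ) : ℝ :=
  ∑ i, Real.log (mixDensity μ G (X i))

/-- `(μh, Gh)` is a joint maximizer of the mixture likelihood over `μ ∈ ℝ` and
probability measures `G` supported in `[σmin, σmax]`; `μh` is then the
empirical Bayes profile MLE. -/
def IsProfileMLE {n : ℕ} (σmin σmax : ℝ) (X : Fin n → ℝ) (μh : ℝ) (Gh : Measure ℝ) : Prop :=
  IsPriorOn σmin σmax Gh ∧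
    ∀ (μ' : ℝ) (G : Measure ℝ), IsPriorOn σmin σmax G → logLik X μ' G ≤ logLik X μh Gh

/-- The empirical distribution `G_n = (1/n) ∑ δ_{σ i}`. -/
noncomputable def empMeasure {n : ℕ} (σ : Fin n → ℝ) : Measure ℝ :=
  (n : ℝ≥0∞)⁻¹ • ∑ i, Measure.dirac (σ i)

/-- The `ε`-covering number of a class `F` of functions under the sup norm on `s`. -/
noncomputable def coveringNum (ε : ℝ) (F : Set (ℝ → ℝ)) (s : Set ℝ) : ℝ≥0∞ :=
  sInf {N : ℝ≥0∞ | ∃ C : Finset (ℝ → ℝ), (C.card : ℝ≥0∞) = N ∧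
    ∀ f ∈ F, ∃ g ∈ C, ∀ x ∈ s, |f x - g x| ≤ ε}

/-- The Hellinger bracketing number `N_{[]}(ε, Pc, H)`: the least number of brackets
`[pᴸ, pᵁ]` of nonnegative functions with `H(pᴸ, pᵁ) ≤ ε` such that every `p ∈ Pc`
satisfies `pᴸ ≤ p ≤ pᵁ` pointwise for some bracket. -/
noncomputable def bracketingNum (ε : ℝ) (Pc : Set (ℝ → ℝ)) : ℝ≥0∞ :=
  sInf {N : ℝ≥0∞ | ∃ B : Finset ((ℝ → ℝ) × (ℝ → ℝ)), (B.card : ℝ≥0∞) = N ∧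
    (∀ b ∈ B, (∀ x, 0 ≤ b.1 x) ∧ hellingerSq b.1 b.2 ≤ ε ^ 2) ∧
    ∀ p ∈ Pc, ∃ b ∈ B, ∀ x, b.1 x ≤ p x ∧ p x ≤ b.2 x}

/-- The local class `Pc(p̄, δ) = {p ∈ Pc : H(p, p̄) ≤ δ}`. -/
def localClass (Pc : Set (ℝ → ℝ)) (pbar : ℝ → ℝ) (δ : ℝ) : Set (ℝ → ℝ) :=
  {p ∈ Pc | hellingerSq p pbar ≤ δ ^ 2}

/-- The class of normal location-scale mixture densities with mixing distribution
supported in `[σmin, σmax]`. -/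
def mixClass (σmin σmax : ℝ) : Set (ℝ → ℝ) :=
  {f | ∃ (μ : ℝ) (G : Measure ℝ), IsPriorOn σmin σmax G ∧ f = mixDensity μ G}

/-- The class of centered normal scale mixture densities with mixing distribution
supported in `[σmin, σmax]`. -/
def mixClass0 (σmin σmax : ℝ) : Set (ℝ → ℝ) :=
  {f | ∃ G : Measure ℝ, IsPriorOn σmin σmax G ∧ f = mixDensity 0 G}

/-- The class of functions `x ↦ E_{t∼H}[t exp(-t²x²/2)]` with `H` a probability measure
on `[tmin, tmax]`. -/
def scaleClass (tmin tmax : ℝ) : Set (ℝ → ℝ) :=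
  {f | ∃ H : Measure ℝ, IsProbabilityMeasure H ∧ H (Set.Icc tmin tmax)ᶜ = 0 ∧
    f = fun x => ∫ t, t * Real.exp (-(t ^ 2 * x ^ 2) / 2) ∂H}

lemma aux_cover {S : Type} [Fintype S] (F : Set (ℝ → ℝ)) (X : Set ℝ) (ε : ℝ)
    (R : (ℝ → ℝ) → S → Prop) (h1 : ∀ f ∈ F, ∃ s, R f s)
    (h2 : ∀ f ∈ F, ∀ f' ∈ F, ∀ s, R f s → R f' s → ∀ x ∈ X, |f x - f' x| ≤ ε) :
    coveringNum ε F X ≤ (Fintype.card S : ℝ≥0∞) := by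
  classical
  let rep : S → (ℝ → ℝ) := fun s => if h : ∃ f ∈ F, R f s then h.choose else 0
  refine le_trans (sInf_le ⟨Finset.univ.image rep, rfl, ?_⟩) ?_
  · intro f hf
    obtain ⟨s, hs⟩ := h1 f hf
    refine ⟨rep s, Finset.mem_image_of_mem _ (Finset.mem_univ _), ?_⟩
    have h : ∃ f ∈ F, R f s := ⟨f, hf, hs⟩
    have hr : rep s = h.choose := by simp only [rep]; rw [dif_pos h]
    rw [hr]
    exact h2 f hf _ h.choose_spec.1 s hs h.choose_spec.2
  · exact_mod_cast Finset.card_image_le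

lemma aux_taylor (z : ℝ) (hz : 0 ≤ z) (m : ℕ) :
    |Real.exp (-z) - ∑ k ∈ Finset.range m, (-z) ^ k / (k.factorial : ℝ)|
      ≤ Real.exp (3 * z - m) := by
  have hs : ∀ w : ℝ, HasSum (fun k : ℕ => w ^ k / (k.factorial : ℝ)) (Real.exp w) := by
    intro w
    rw [Real.exp_eq_exp_ℝ]
    exact NormedSpace.expSeries_div_hasSum_exp w
  have h1 := (hasSum_nat_add_iff' m).2 (hs (-z))
  have h2 : HasSum (fun k : ℕ => Real.exp (-m) * ((3 * z) ^ k / (k.factorial : ℝ)))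
    (Real.exp (-m) * Real.exp (3 * z)) := (hs (3 * z)).mul_left _
  have h3 := (summable_nat_add_iff m).2 h2.summable
  rw [← h1.tsum_eq, ← Real.norm_eq_abs]
  have hb : ∀ k : ℕ, ‖(-z) ^ (k + m) / ((k + m).factorial : ℝ)‖ ≤
      Real.exp (-m) * ((3 * z) ^ (k + m) / ((k + m).factorial : ℝ)) := by
    intro k
    rw [norm_div, norm_pow, norm_neg, Real.norm_of_nonneg hz,
      Real.norm_of_nonneg (by positivity : (0 : ℝ) ≤ ((k + m).factorial : ℝ)), ← mul_div_assoc,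
      mul_pow, ← mul_assoc]
    gcongr
    refine le_mul_of_one_le_left (by positivity) ?_
    have he : Real.exp 1 ≤ 3 := by linarith [Real.exp_one_lt_d9]
    calc (1 : ℝ) = Real.exp (-m) * Real.exp 1 ^ m := by
          rw [← Real.exp_nat_mul, ← Real.exp_add]; simp
      _ ≤ Real.exp (-m) * 3 ^ m := by gcongr
      _ ≤ Real.exp (-m) * 3 ^ (k + m) := by
          gcongr
          · norm_num
          · omega
  refine (tsum_of_norm_bounded h3.hasSum hb).trans ?_
  have := h2.summable.sum_add_tsum_nat_add m
  rw [h2.tsum_eq, ← Real.exp_add] at this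
  have hp : 0 ≤ ∑ k ∈ Finset.range m, Real.exp (-m) * ((3 * z) ^ k / (k.factorial : ℝ)) := by
    positivity
  rw [show 3 * z - (m : ℝ) = -m + 3 * z by ring]
  linarith

lemma aux_int (ν : Measure ℝ) [IsFiniteMeasure ν] (a b : ℝ)
    (hs : ∀ᵐ t ∂ν, t ∈ Set.Icc a b) (g : ℝ → ℝ) (hg : Continuous g) : Integrable g ν := by
  obtain ⟨c, hc⟩ := (isCompact_Icc (a := a) (b := b)).exists_bound_of_continuousOn hg.continuousOn
  refine Integrable.of_bound hg.aestronglyMeasurable c ?_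
  filter_upwards [hs] with t ht using hc t ht

lemma aux_approx (ν : Measure ℝ) [IsFiniteMeasure ν] (hν : ν.real Set.univ ≤ 1)
    (b x K : ℝ) (hb : 0 < b) (m : ℕ)
    (hs : ∀ᵐ t ∂ν, t ∈ Set.Icc (b / 3) b) (hx : (b * x) ^ 2 / 2 ≤ 9 * K) :
    |(∫ t, t * Real.exp (-(t ^ 2 * x ^ 2) / 2) ∂ν) -
      ∑ k ∈ Finset.range m, (b * ((-((b * x) ^ 2 / 2)) ^ k / (k.factorial : ℝ))) *
        ∫ t, (t / b) ^ (2 * k + 1) ∂ν| ≤ b * Real.exp (27 * K - m) := by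
  have hi1 : Integrable (fun t => t * Real.exp (-(t ^ 2 * x ^ 2) / 2)) ν :=
    aux_int ν _ _ hs _ (by fun_prop)
  have hi2 : ∀ k ∈ Finset.range m, Integrable
      (fun t => (b * ((-((b * x) ^ 2 / 2)) ^ k / (k.factorial : ℝ))) * (t / b) ^ (2 * k + 1)) ν :=
    fun k _ => aux_int ν _ _ hs _ (by fun_prop)
  simp_rw [← integral_const_mul]
  rw [← integral_finset_sum _ hi2, ← integral_sub hi1 (integrable_finset_sum _ hi2),
    ← Real.norm_eq_abs]
  refine (norm_integral_le_of_norm_le_const (C := b * Real.exp (27 * K - m)) ?_).trans ?_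
  · filter_upwards [hs] with t ht
    obtain ⟨ht1, ht2⟩ := ht
    have ht0 : 0 ≤ t := le_trans (by positivity) ht1
    have e1 : ∀ k : ℕ, (b * ((-((b * x) ^ 2 / 2)) ^ k / (k.factorial : ℝ))) * (t / b) ^ (2 * k + 1)
        = t * ((-(t ^ 2 * x ^ 2 / 2)) ^ k / (k.factorial : ℝ)) := by
      intro k
      have : -(t ^ 2 * x ^ 2 / 2) = (-((b * x) ^ 2 / 2)) * (t / b) ^ 2 := by
        field_simp
      rw [this, mul_pow (-((b * x) ^ 2 / 2)) ((t / b) ^ 2) k, ← pow_mul (t / b) 2 k,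
        pow_succ (t / b) (2 * k)]
      generalize (-((b * x) ^ 2 / 2)) ^ k = w
      generalize (t / b) ^ (2 * k) = w'
      field_simp
    simp_rw [e1]
    rw [← Finset.mul_sum, ← mul_sub, norm_mul, Real.norm_of_nonneg ht0, Real.norm_eq_abs, neg_div]
    have hz : t ^ 2 * x ^ 2 / 2 ≤ 9 * K := by
      refine le_trans ?_ hx
      rw [mul_pow]; gcongr
    have := aux_taylor (t ^ 2 * x ^ 2 / 2) (by positivity) m
    refine mul_le_mul ht2 (this.trans (Real.exp_le_exp.2 (by linarith))) (abs_nonneg _) hb.le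
  · exact mul_le_of_le_one_right (by positivity) hν

lemma aux_big (ν : Measure ℝ) [IsFiniteMeasure ν] (hν : ν.real Set.univ ≤ 1)
    (b x K : ℝ) (hb : 0 < b)
    (hs : ∀ᵐ t ∂ν, t ∈ Set.Icc (b / 3) b) (hx : 9 * K ≤ (b * x) ^ 2 / 2) :
    0 ≤ (∫ t, t * Real.exp (-(t ^ 2 * x ^ 2) / 2) ∂ν) ∧
    (∫ t, t * Real.exp (-(t ^ 2 * x ^ 2) / 2) ∂ν) ≤ b * Real.exp (-K) := by
  constructor
  · apply integral_nonneg_of_ae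
    filter_upwards [hs] with t ht
    have ht0 : 0 ≤ t := le_trans (by positivity) ht.1
    simp only [Pi.zero_apply]
    positivity
  · refine (le_abs_self _).trans ?_
    rw [← Real.norm_eq_abs]
    refine (norm_integral_le_of_norm_le_const (C := b * Real.exp (-K)) ?_).trans
      (mul_le_of_le_one_right (by positivity) hν)
    filter_upwards [hs] with t ht
    have ht0 : 0 ≤ t := le_trans (by positivity) ht.1
    rw [Real.norm_of_nonneg (by positivity)]
    have h1 : (b / 3) ^ 2 * x ^ 2 ≤ t ^ 2 * x ^ 2 := by gcongr; exact ht.1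
    refine mul_le_mul ht.2 (Real.exp_le_exp.2 ?_) (Real.exp_pos _).le hb.le
    nlinarith

lemma aux_cell (ν ν' : Measure ℝ) [IsFiniteMeasure ν] [IsFiniteMeasure ν']
    (hν : ν.real Set.univ ≤ 1) (hν' : ν'.real Set.univ ≤ 1)
    (b x K δ : ℝ) (hb : 0 < b) (m : ℕ) (hδ : 0 ≤ δ)
    (hs : ∀ᵐ t ∂ν, t ∈ Set.Icc (b / 3) b) (hs' : ∀ᵐ t ∂ν', t ∈ Set.Icc (b / 3) b)
    (hM : ∀ k < m, |(∫ t, (t / b) ^ (2 * k + 1) ∂ν) - ∫ t, (t / b) ^ (2 * k + 1) ∂ν'| ≤ δ) :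
    |(∫ t, t * Real.exp (-(t ^ 2 * x ^ 2) / 2) ∂ν) -
      ∫ t, t * Real.exp (-(t ^ 2 * x ^ 2) / 2) ∂ν'| ≤
      b * (Real.exp (-K) + 2 * Real.exp (27 * K - m) + δ * Real.exp (9 * K)) := by
  rcases le_total (9 * K) ((b * x) ^ 2 / 2) with hx | hx
  · obtain ⟨h1, h2⟩ := aux_big ν hν b x K hb hs hx
    obtain ⟨h3, h4⟩ := aux_big ν' hν' b x K hb hs' hx
    have : 0 ≤ b * (2 * Real.exp (27 * K - m) + δ * Real.exp (9 * K)) := by positivity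
    rw [abs_le]; constructor <;> linarith
  · have h1 := aux_approx ν hν b x K hb m hs hx
    have h2 := aux_approx ν' hν' b x K hb m hs' hx
    have h3 : |(∑ k ∈ Finset.range m, (b * ((-((b * x) ^ 2 / 2)) ^ k / (k.factorial : ℝ))) *
        ∫ t, (t / b) ^ (2 * k + 1) ∂ν) - ∑ k ∈ Finset.range m,
        (b * ((-((b * x) ^ 2 / 2)) ^ k / (k.factorial : ℝ))) *
        ∫ t, (t / b) ^ (2 * k + 1) ∂ν'| ≤ b * (δ * Real.exp (9 * K)) := by
      rw [← Finset.sum_sub_distrib]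
      refine (Finset.abs_sum_le_sum_abs _ _).trans ?_
      have hw : 0 ≤ (b * x) ^ 2 / 2 := by positivity
      calc _ ≤ ∑ k ∈ Finset.range m, (b * δ) * (((b * x) ^ 2 / 2) ^ k / (k.factorial : ℝ)) := by
            refine Finset.sum_le_sum fun k hk => ?_
            rw [← mul_sub, abs_mul, abs_mul, abs_of_pos hb, abs_div, abs_pow, abs_neg,
              abs_of_nonneg hw, abs_of_nonneg (by positivity : (0 : ℝ) ≤ (k.factorial : ℝ))]
            have := hM k (Finset.mem_range.1 hk)
            calc _ ≤ (b * (((b * x) ^ 2 / 2) ^ k / (k.factorial : ℝ))) * δ := by gcongr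
              _ = _ := by ring
        _ = (b * δ) * ∑ k ∈ Finset.range m, (((b * x) ^ 2 / 2) ^ k / (k.factorial : ℝ)) := by
            rw [Finset.mul_sum]
        _ ≤ (b * δ) * Real.exp (9 * K) := by
            gcongr
            exact (Real.sum_le_exp_of_nonneg hw m).trans (Real.exp_le_exp.2 hx)
        _ = _ := by ring
    have : 0 ≤ b * Real.exp (-K) := by positivity
    rw [abs_le] at *
    constructor <;> linarith [h1.1, h1.2, h2.1, h2.2, h3.1, h3.2]

/-- Dyadic-type cell. -/
def cellSet (a : ℝ) (j : ℕ) : Set ℝ := Set.Ico (a * Real.exp j) (a * Real.exp (j + 1))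

lemma aux_disj (a : ℝ) (ha : 0 < a) : Pairwise (Function.onFun Disjoint (cellSet a)) := by
  have key : ∀ i j : ℕ, i < j → Disjoint (cellSet a i) (cellSet a j) := by
    intro i j hij
    rw [Set.disjoint_left]
    intro t ht ht'
    have h1 : t < a * Real.exp (i + 1) := ht.2
    have h2 : a * Real.exp j ≤ t := ht'.1
    have h3 : a * Real.exp (i + 1) ≤ a * Real.exp j := by
      gcongr; exact_mod_cast hij
    linarith
  intro i j hij
  rcases lt_or_gt_of_ne hij with h | h
  · exact key i j h
  · exact (key j i h).symm

lemma aux_decomp (H : Measure ℝ) [IsProbabilityMeasure H] (a b : ℝ) (ha : 0 < a) (n : ℕ)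
    (hn : b < a * Real.exp n) (hH : H (Set.Icc a b)ᶜ = 0) (g : ℝ → ℝ) (hg : Continuous g) :
    ∫ t, g t ∂H = ∑ j : Fin n, ∫ t, g t ∂(H.restrict (cellSet a j)) := by
  have hae : ∀ᵐ t ∂H, t ∈ Set.Icc a b := hH
  have hi : Integrable g H := aux_int H a b hae g hg
  have hd := aux_disj a ha
  rw [← integral_iUnion_fintype (s := fun j : Fin n => cellSet a j) (fun j => measurableSet_Ico)
    (fun i j hij => hd (fun h => hij (Fin.ext h))) (fun j => hi.integrableOn)]
  rw [Measure.restrict_eq_self_of_ae_mem]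
  filter_upwards [hae] with t ht
  have h0 : 0 < t := lt_of_lt_of_le ha ht.1
  have hl : 0 ≤ Real.log (t / a) := Real.log_nonneg ((one_le_div ha).2 ht.1)
  have he : a * Real.exp (Real.log (t / a)) = t := by
    rw [Real.exp_log (by positivity)]; field_simp
  have h1 : a * Real.exp (⌊Real.log (t / a)⌋₊ : ℝ) ≤ t := by
    conv_rhs => rw [← he]
    gcongr; exact Nat.floor_le hl
  have h2 : t < a * Real.exp (⌊Real.log (t / a)⌋₊ + 1 : ℝ) := by
    conv_lhs => rw [← he]
    gcongr; exact Nat.lt_floor_add_one _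
  refine Set.mem_iUnion.2 ⟨⟨⌊Real.log (t / a)⌋₊, ?_⟩, h1, h2⟩
  have h3 : a * Real.exp (⌊Real.log (t / a)⌋₊ : ℝ) < a * Real.exp n := by linarith [ht.2]
  have h4 := Real.exp_lt_exp.1 (lt_of_mul_lt_mul_left h3 ha.le)
  exact_mod_cast h4

lemma aux_lip (x t t' : ℝ) :
    |t * Real.exp (-(t ^ 2 * x ^ 2) / 2) - t' * Real.exp (-(t' ^ 2 * x ^ 2) / 2)| ≤ |t - t'| := by
  have hd : ∀ s : ℝ, HasDerivAt (fun t : ℝ => t * Real.exp (-(t ^ 2 * x ^ 2) / 2))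
      ((1 - s ^ 2 * x ^ 2) * Real.exp (-(s ^ 2 * x ^ 2) / 2)) s := by
    intro s
    have h1 : HasDerivAt (fun t : ℝ => -(t ^ 2 * x ^ 2) / 2) (-(2 * s * x ^ 2) / 2) s := by
      have := ((((hasDerivAt_pow 2 s).mul_const (x ^ 2)).neg).div_const 2)
      exact HasDerivAt.congr_deriv this (by norm_num)
    have := (hasDerivAt_id s).mul h1.exp
    exact HasDerivAt.congr_deriv this (by simp only [id]; ring)
  have := Convex.norm_image_sub_le_of_norm_hasDerivWithin_le (C := 1) (s := Set.univ)
    (f := fun t : ℝ => t * Real.exp (-(t ^ 2 * x ^ 2) / 2)) (x := t') (y := t)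
    (fun s _ => (hd s).hasDerivWithinAt) ?_ convex_univ (Set.mem_univ _) (Set.mem_univ _)
  · simpa using this
  · intro s _
    rw [norm_mul, Real.norm_of_nonneg (Real.exp_pos _).le, Real.norm_eq_abs]
    have hu : 0 ≤ s ^ 2 * x ^ 2 := by positivity
    set u := s ^ 2 * x ^ 2
    have h1 : |1 - u| ≤ Real.exp (u / 2) := by
      have := Real.quadratic_le_exp_of_nonneg (x := u / 2) (by positivity)
      rw [abs_le]
      constructor <;> nlinarith [sq_nonneg (u - 2)]
    calc _ ≤ Real.exp (u / 2) * Real.exp (-u / 2) := by gcongr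
      _ = 1 := by rw [← Real.exp_add]; ring_nf; simp

lemma aux_small (tmin tmax xmin xmax ε : ℝ) (h1 : 0 < tmin)
    (h : (tmax - tmin) / 2 ≤ ε) :
    coveringNum ε (scaleClass tmin tmax) (Set.Icc xmin xmax) ≤ 1 := by
  refine sInf_le ⟨{fun x => ((tmin + tmax) / 2) *
    Real.exp (-(((tmin + tmax) / 2) ^ 2 * x ^ 2) / 2)}, by simp, ?_⟩
  rintro f ⟨H, hP, hH, rfl⟩
  refine ⟨_, Finset.mem_singleton_self _, fun x _ => ?_⟩
  have hae : ∀ᵐ t ∂H, t ∈ Set.Icc tmin tmax := hH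
  have hi : Integrable (fun t => t * Real.exp (-(t ^ 2 * x ^ 2) / 2)) H :=
    aux_int H _ _ hae _ (by fun_prop)
  set c := ((tmin + tmax) / 2) * Real.exp (-(((tmin + tmax) / 2) ^ 2 * x ^ 2) / 2) with hc
  have : (∫ t, t * Real.exp (-(t ^ 2 * x ^ 2) / 2) ∂H) - c =
      ∫ t, (t * Real.exp (-(t ^ 2 * x ^ 2) / 2) - c) ∂H := by
    rw [integral_sub hi (integrable_const _)]; simp
  simp only
  rw [this, ← Real.norm_eq_abs]
  refine (norm_integral_le_of_norm_le_const (C := ε) ?_).trans (by simp)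
  filter_upwards [hae] with t ht
  rw [Real.norm_eq_abs]
  refine (aux_lip x t ((tmin + tmax) / 2)).trans ?_
  rw [abs_le]
  constructor <;> linarith [ht.1, ht.2]

/-- normalized moments -/
noncomputable def cellMom (a : ℝ) (H : Measure ℝ) (j k : ℕ) : ℝ :=
  ∫ t, (t / (a * Real.exp (j + 1))) ^ (2 * k + 1) ∂(H.restrict (cellSet a j))

lemma aux_cell_ae (a : ℝ) (ha : 0 < a) (H : Measure ℝ) (j : ℕ) :
    ∀ᵐ t ∂(H.restrict (cellSet a j)),
      t ∈ Set.Icc (a * Real.exp (j + 1) / 3) (a * Real.exp (j + 1)) := by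
  have : ∀ᵐ t ∂(H.restrict (cellSet a j)), t ∈ cellSet a j :=
    ae_restrict_mem measurableSet_Ico
  filter_upwards [this] with t ht
  refine ⟨le_trans ?_ ht.1, ht.2.le⟩
  have he : Real.exp 1 ≤ 3 := by linarith [Real.exp_one_lt_d9]
  rw [Real.exp_add]
  have : a * Real.exp j * Real.exp 1 ≤ a * Real.exp j * 3 := by gcongr
  linarith

lemma aux_restrict_le (H : Measure ℝ) [IsProbabilityMeasure H] (s : Set ℝ) :
    (H.restrict s).real Set.univ ≤ 1 := by
  rw [measureReal_restrict_apply_univ]; exact measureReal_le_one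

lemma aux_mom (a : ℝ) (ha : 0 < a) (H : Measure ℝ) [IsProbabilityMeasure H] (j k : ℕ) :
    0 ≤ cellMom a H j k ∧ cellMom a H j k ≤ 1 := by
  have hb : 0 < a * Real.exp (j + 1) := by positivity
  have hae := aux_cell_ae a ha H j
  constructor
  · apply integral_nonneg_of_ae
    filter_upwards [hae] with t ht
    have ht0 : 0 ≤ t := le_trans (by positivity) ht.1
    simp only [Pi.zero_apply]
    positivity
  · refine (le_abs_self _).trans ?_
    rw [← Real.norm_eq_abs]
    refine (norm_integral_le_of_norm_le_const (C := 1) ?_).trans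
      (by simpa using aux_restrict_le H (cellSet a j))
    filter_upwards [hae] with t ht
    have ht0 : 0 ≤ t := le_trans (by positivity) ht.1
    rw [Real.norm_of_nonneg (by positivity)]
    exact pow_le_one₀ (by positivity) ((div_le_one hb).2 ht.2)

lemma aux_main (tmin tmax xmin xmax ε L : ℝ) (h0 : 0 < tmin) (hL : 1 ≤ L) (htt : tmin ≤ tmax)
    (hL4 : 4 ≤ Real.exp L) (hε : 0 < ε)
    (hA : tmax ≤ ε * Real.exp L) (hB : tmax ≤ tmin * Real.exp L) :
    coveringNum ε (scaleClass tmin tmax) (Set.Icc xmin xmax) ≤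
      ENNReal.ofReal (Real.exp (9266 * L ^ 3)) := by
  set n : ℕ := ⌊L⌋₊ + 1 with hn
  set m : ℕ := ⌈112 * L⌉₊ with hm
  set B : ℕ := ⌊Real.exp (40 * L)⌋₊ with hBd
  have hnL : (n : ℝ) ≤ L + 1 := by
    rw [hn]; push_cast; linarith [Nat.floor_le (by linarith : 0 ≤ L)]
  have hnL' : L < n := by rw [hn]; push_cast; exact Nat.lt_floor_add_one L
  have hm1 : 112 * L ≤ m := Nat.le_ceil _
  have hm2 : (m : ℝ) ≤ 113 * L := by
    have := Nat.ceil_lt_add_one (by linarith : 0 ≤ 112 * L)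
    linarith
  have hnn : tmax < tmin * Real.exp n :=
    hB.trans_lt (by gcongr)
  have hcov := aux_cover (S := Fin n → Fin m → Fin (B + 1)) (scaleClass tmin tmax)
    (Set.Icc xmin xmax) ε
    (fun f s => ∃ H : Measure ℝ, IsProbabilityMeasure H ∧ H (Set.Icc tmin tmax)ᶜ = 0 ∧
      (f = fun x => ∫ t, t * Real.exp (-(t ^ 2 * x ^ 2) / 2) ∂H) ∧
      ∀ j k, ((s j k : ℕ)) = ⌊cellMom tmin H j k * Real.exp (40 * L)⌋₊) ?_ ?_
  · refine hcov.trans ?_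
    rw [← ENNReal.ofReal_natCast]
    apply ENNReal.ofReal_le_ofReal
    simp only [Fintype.card_pi, Fintype.card_fin, Finset.prod_const, Finset.card_univ]
    push_cast
    have hB1 : (B : ℝ) + 1 ≤ Real.exp (41 * L) := by
      have h1 : (B : ℝ) ≤ Real.exp (40 * L) := Nat.floor_le (Real.exp_pos _).le
      have h2 : Real.exp (41 * L) = Real.exp (40 * L) * Real.exp L := by
        rw [← Real.exp_add]; ring_nf
      have h3 : 1 ≤ Real.exp (40 * L) := Real.one_le_exp (by linarith)
      rw [h2]; nlinarith
    calc (((B : ℝ) + 1) ^ m) ^ n ≤ (Real.exp (41 * L) ^ m) ^ n := by gcongr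
      _ = Real.exp (n * (m * (41 * L))) := by rw [Real.exp_nat_mul, Real.exp_nat_mul]
      _ ≤ Real.exp ((2 * L) * ((113 * L) * (41 * L))) := by
          gcongr; linarith
      _ = _ := by ring_nf
  · rintro f ⟨H, hP, hH, rfl⟩
    refine ⟨fun j k => ⟨⌊cellMom tmin H j k * Real.exp (40 * L)⌋₊, ?_⟩, H, hP, hH, rfl,
      fun j k => rfl⟩
    rw [Nat.lt_succ_iff]
    apply Nat.floor_le_floor
    exact mul_le_of_le_one_left (Real.exp_pos _).le (aux_mom tmin h0 H j k).2
  · rintro f - f' - s ⟨H, hP, hH, rfl, hq⟩ ⟨H', hP', hH', rfl, hq'⟩ x -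
    simp only
    rw [aux_decomp H tmin tmax h0 n hnn hH _ (by fun_prop),
      aux_decomp H' tmin tmax h0 n hnn hH' _ (by fun_prop), ← Finset.sum_sub_distrib]
    refine (Finset.abs_sum_le_sum_abs _ _).trans ?_
    have hcell : ∀ j : Fin n, |(∫ t, t * Real.exp (-(t ^ 2 * x ^ 2) / 2) ∂(H.restrict (cellSet tmin j)))
        - ∫ t, t * Real.exp (-(t ^ 2 * x ^ 2) / 2) ∂(H'.restrict (cellSet tmin j))| ≤
        12 * tmax * Real.exp (-(4 * L)) := by
      intro j
      by_cases hj : tmax < tmin * Real.exp j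
      · have hz : ∀ H : Measure ℝ, H (Set.Icc tmin tmax)ᶜ = 0 → H.restrict (cellSet tmin j) = 0 := by
          intro H hH
          rw [Measure.restrict_eq_zero]
          refine measure_mono_null ?_ hH
          intro t ht ht'
          have h1 : tmin * Real.exp j ≤ t := ht.1
          linarith [ht'.2]
        rw [hz H hH, hz H' hH']
        have : 0 ≤ tmax := by linarith
        simp only [integral_zero_measure, sub_zero, abs_zero]
        positivity
      push Not at hj
      have hb3 : tmin * Real.exp (j + 1) ≤ 3 * tmax := by
        have he : Real.exp 1 ≤ 3 := by linarith [Real.exp_one_lt_d9]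
        rw [Real.exp_add]
        have : tmin * Real.exp j * Real.exp 1 ≤ tmin * Real.exp j * 3 := by gcongr
        linarith
      have := aux_cell (H.restrict (cellSet tmin j)) (H'.restrict (cellSet tmin j))
        (aux_restrict_le H _) (aux_restrict_le H' _) (tmin * Real.exp (j + 1)) x (4 * L)
        (Real.exp (-(40 * L))) (by positivity) m (Real.exp_pos _).le
        (aux_cell_ae tmin h0 H j) (aux_cell_ae tmin h0 H' j) ?_
      · refine this.trans ?_
        have e1 : Real.exp (27 * (4 * L) - m) ≤ Real.exp (-(4 * L)) :=
          Real.exp_le_exp.2 (by linarith)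
        have e2 : Real.exp (-(40 * L)) * Real.exp (9 * (4 * L)) = Real.exp (-(4 * L)) := by
          rw [← Real.exp_add]; ring_nf
        rw [e2]
        calc _ ≤ (3 * tmax) * (Real.exp (-(4 * L)) + 2 * Real.exp (-(4 * L)) + Real.exp (-(4 * L))) := by
              gcongr
              linarith
          _ = _ := by ring
      · intro k hk
        have h1 := hq j ⟨k, hk⟩
        rw [hq' j ⟨k, hk⟩] at h1
        simp only at h1
        change |cellMom tmin H j k - cellMom tmin H' j k| ≤ _
        obtain ⟨p1, -⟩ := aux_mom tmin h0 H j k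
        obtain ⟨p2, -⟩ := aux_mom tmin h0 H' j k
        set u := cellMom tmin H j k
        set v := cellMom tmin H' j k
        have hE := Real.exp_pos (40 * L)
        set E := Real.exp (40 * L)
        have a1 := Nat.floor_le (mul_nonneg p1 hE.le)
        have a2 := Nat.lt_floor_add_one (u * E)
        have a3 := Nat.floor_le (mul_nonneg p2 hE.le)
        have a4 := Nat.lt_floor_add_one (v * E)
        rw [h1] at a3 a4
        rw [Real.exp_neg, ← one_div, le_div_iff₀ hE]
        rw [show |u - v| * E = |(u - v) * E| by rw [abs_mul, abs_of_pos hE], abs_le]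
        constructor <;> nlinarith
    refine (Finset.sum_le_sum fun j _ => hcell j).trans ?_
    simp only [Finset.sum_const, Finset.card_univ, Fintype.card_fin, nsmul_eq_mul]
    have hn2 : (n : ℝ) ≤ Real.exp L := hnL.trans (Real.add_one_le_exp L)
    have hEm : Real.exp (-(4 * L)) = (Real.exp L ^ 4)⁻¹ := by
      rw [← Real.exp_nat_mul, ← Real.exp_neg]; norm_num
    rw [hEm]
    set E := Real.exp L
    have hE : 0 < E := by linarith
    have ht0 : 0 ≤ tmax := by linarith
    calc (n : ℝ) * (12 * tmax * (E ^ 4)⁻¹) ≤ E * (12 * (ε * E) * (E ^ 4)⁻¹) := by gcongr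
      _ = ε * (12 / E ^ 2) := by field_simp
      _ ≤ ε * 1 := by
          gcongr
          rw [div_le_one (by positivity)]; nlinarith
      _ = ε := mul_one _

/-- Lemma 7 / `lemma:key-covering`. Sup-norm covering entropy bound for
the class of scale mixtures `x ↦ E_{t∼H}[t e^{-t²x²/2}]`, `H ∈ 𝒫([tmin, tmax])`, over
`[xmin, xmax]`: `log N(ε, ℱ, L_∞) ≤ C log³(tmax xmax/(ε tmin xmin)) log⁴ log(⋯)`, stated
as a bound on the covering number itself. -/
theorem stmt10 :
    ∃ C : ℝ, 0 < C ∧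
      ∀ tmin tmax xmin xmax ε : ℝ,
        0 < tmin → tmin ≤ 1 → 1 ≤ tmax →
        0 < xmin → xmin ≤ 1 → 1 ≤ xmax →
        ε ∈ Set.Ioo (0 : ℝ) (1 / 2) →
        coveringNum ε (scaleClass tmin tmax) (Set.Icc xmin xmax) ≤
          ENNReal.ofReal (Real.exp
            (C * (Real.log (tmax * xmax / (ε * tmin * xmin))) ^ 3 *
              (Real.log (Real.log (tmax * xmax / (ε * tmin * xmin)))) ^ 4)) := by
  refine ⟨10 ^ 7, by norm_num, ?_⟩
  intro tmin tmax xmin xmax ε ht0 ht1 ht2 hx0 hx1 hx2 hε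
  obtain ⟨hε0, hε1⟩ := hε
  have hden : 0 < ε * tmin * xmin := by positivity
  set A := tmax * xmax / (ε * tmin * xmin) with hA
  have hAe : tmax * xmax = A * (ε * tmin * xmin) := by rw [hA]; field_simp
  have hA0 : 0 < A := by positivity
  have htx : tmax ≤ tmax * xmax := by nlinarith
  have hxm : ε * tmin * xmin ≤ ε * tmin := mul_le_of_le_one_right (by positivity) hx1
  have hAt : tmax ≤ A * (ε * tmin) := by
    have : A * (ε * tmin * xmin) ≤ A * (ε * tmin) := by gcongr
    linarith
  rcases le_total A 4 with h4 | h4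
  · refine (aux_small tmin tmax xmin xmax ε ht0 ?_).trans ?_
    · have h1 : tmax ≤ 4 * (ε * tmin) := hAt.trans (by gcongr)
      nlinarith
    · rw [← ENNReal.ofReal_one]
      apply ENNReal.ofReal_le_ofReal
      apply Real.one_le_exp
      have hA1 : 1 ≤ A := by
        have : ε * tmin ≤ 1 := by nlinarith
        nlinarith
      have := Real.log_nonneg hA1
      positivity
  · have hl4 : (1.38 : ℝ) ≤ Real.log 4 := by
      rw [show (4 : ℝ) = 2 ^ 2 by norm_num, Real.log_pow]
      push_cast
      linarith [Real.log_two_gt_d9]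
    have hL : 1.38 ≤ Real.log A := hl4.trans (Real.log_le_log (by norm_num) h4)
    have hexp : Real.exp (Real.log A) = A := Real.exp_log hA0
    set L := Real.log A
    refine (aux_main tmin tmax xmin xmax ε L ht0 (by linarith) (by linarith) (by rw [hexp]; exact h4)
      hε0 ?_ ?_).trans ?_
    · rw [hexp]; refine hAt.trans ?_
      have : A * (ε * tmin) ≤ A * (ε * 1) := by gcongr
      linarith
    · rw [hexp]; refine hAt.trans ?_
      have : A * (ε * tmin) ≤ A * (1 * tmin) := by gcongr; linarith
      linarith
    · apply ENNReal.ofReal_le_ofReal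
      apply Real.exp_le_exp.2
      have hll : (1 / 5 : ℝ) ≤ Real.log L := by
        have h1 := Real.one_sub_inv_le_log_of_pos (by linarith : 0 < L)
        have h2 : L⁻¹ ≤ (1.38 : ℝ)⁻¹ := by gcongr
        norm_num at h2
        linarith
      have h3 : (1 / 5 : ℝ) ^ 4 ≤ Real.log L ^ 4 := by gcongr
      have h5 : 0 ≤ L ^ 3 := by positivity
      nlinarith
end

section
/- Let K > 0 and λ > 0, and let h(x) = exp(−K e^{λx}) on [−1,1]. There is a universal constant C > 0 such that for every ε ∈ (0,1), if L ≥ C·( log(1/ε) + λ log((λ+1)/ε) ), then the degree-L Chebyshev truncation P_L of h satisfies sup_{x ∈ [−1,1]} |h(x) − P_L(x)| ≤ ε. In particular, the approximation degree is independent of K. -/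
open MeasureTheory

/-- The `j`-th Chebyshev coefficient of a continuous function `h` on `[-1,1]`:
`c₀ = (1/π)∫₀^π h(cos θ) dθ` and `c_j = (2/π)∫₀^π h(cos θ) cos(jθ) dθ` for `j ≥ 1`. -/
noncomputable def chebCoeff (h : ℝ → ℝ) (j : ℕ) : ℝ :=
  if j = 0 then (1 / Real.pi) * ∫ θ in (0 : ℝ)..Real.pi, h (Real.cos θ)
  else (2 / Real.pi) * ∫ θ in (0 : ℝ)..Real.pi, h (Real.cos θ) * Real.cos (j * θ)

/-- The degree-`L` Chebyshev truncation `P_L(x) = ∑_{j=0}^L c_j T_j(x)` of `h`. -/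
noncomputable def chebTrunc (h : ℝ → ℝ) (L : ℕ) (x : ℝ) : ℝ :=
  ∑ j ∈ Finset.range (L + 1),
    chebCoeff h j * (Polynomial.Chebyshev.T ℝ (j : ℤ)).eval x

open Real in
lemma int_even (h : ℝ → ℝ) (hc : Continuous h) (m : ℤ) :
    ∫ x in (-π)..π, Complex.exp (-Complex.I * m * x) * (h (cos x) : ℂ)
      = 2 * ((∫ x in (0:ℝ)..π, h (cos x) * cos (m * x) : ℝ) : ℂ) := by
  have hcont : Continuous fun x : ℝ => Complex.exp (-Complex.I * m * x) * (h (cos x) : ℂ) := by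
    fun_prop
  rw [← intervalIntegral.integral_add_adjacent_intervals (b := 0)
    (hcont.intervalIntegrable _ _) (hcont.intervalIntegrable _ _)]
  have h1 := intervalIntegral.integral_comp_neg (a := 0) (b := π)
    (f := fun x : ℝ => Complex.exp (-Complex.I * m * x) * (h (cos x) : ℂ))
  rw [neg_zero] at h1
  rw [← h1, ← intervalIntegral.integral_add ((by fun_prop : Continuous _).intervalIntegrable _ _)
    (hcont.intervalIntegrable _ _), ← intervalIntegral.integral_ofReal,
    ← intervalIntegral.integral_const_mul]
  congr 1
  ext x
  push_cast
  rw [Complex.cos, Real.cos_neg]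
  ring_nf

open Real in
lemma shift_bound (K lam y : ℝ) (hK : 0 < K) (hl : 0 < lam) (hy : 0 ≤ y)
    (hs : lam * sinh y ≤ π / 2) (n : ℕ) :
    ‖∫ x in (-π)..π, Complex.exp (-Complex.I * (n : ℤ) * x) *
      ((exp (-K * exp (lam * cos x)) : ℝ) : ℂ)‖ ≤ 2 * π * exp (-y) ^ n := by
  set G : ℂ → ℂ := fun z => Complex.exp (-Complex.I * (n : ℤ) * z) *
    Complex.exp (-K * Complex.exp (lam * Complex.cos z)) with hG
  have hd : Differentiable ℂ G := by
    intro z; simp only [hG]; fun_prop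
  have key := Complex.integral_boundary_rect_eq_zero_of_differentiableOn G (-π : ℝ)
    ((π : ℝ) + (-y : ℝ) * Complex.I) hd.differentiableOn
  have hper : ∀ t : ℝ, G ((π : ℝ) + t * Complex.I) = G ((-π : ℝ) + t * Complex.I) := by
    intro t
    have e : ((π : ℝ) : ℂ) + t * Complex.I = ((-π : ℝ) + t * Complex.I) + 2 * π := by
      push_cast; ring
    rw [e]
    simp only [hG]
    rw [Complex.cos_add_two_pi, mul_add, Complex.exp_add]
    have : Complex.exp (-Complex.I * (n : ℤ) * (2 * π)) = 1 := by
      rw [Complex.exp_eq_one_iff]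
      exact ⟨-n, by push_cast; ring⟩
    rw [this, mul_one]
  have z1 : ((-π : ℝ) : ℂ).im = 0 := Complex.ofReal_im _
  have z2 : ((-π : ℝ) : ℂ).re = -π := Complex.ofReal_re _
  have w1 : (((π : ℝ) : ℂ) + (-y : ℝ) * Complex.I).im = -y := by simp
  have w2 : (((π : ℝ) : ℂ) + (-y : ℝ) * Complex.I).re = π := by simp
  rw [z1, z2, w1, w2] at key
  simp only [hper] at key
  rw [add_sub_cancel_right, sub_eq_zero] at key
  have e0 : ∀ x : ℝ, Complex.exp (-Complex.I * (n : ℤ) * x) *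
      ((exp (-K * exp (lam * cos x)) : ℝ) : ℂ) = G (x + (0 : ℝ) * Complex.I) := by
    intro x; simp [hG]
  simp only [e0]
  rw [key]
  have hb : ∀ x ∈ Set.uIoc (-π) π, ‖G (x + (-y : ℝ) * Complex.I)‖ ≤ exp (-y) ^ n := by
    intro x _
    simp only [hG]
    rw [norm_mul, Complex.norm_exp, Complex.norm_exp]
    have a1 : (-Complex.I * (n : ℤ) * (x + (-y : ℝ) * Complex.I)).re = n * (-y) := by
      simp
    have a2 : (-(K : ℂ) * Complex.exp (lam * Complex.cos (x + (-y : ℝ) * Complex.I))).re ≤ 0 := by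
      have im : (lam * Complex.cos (x + (-y : ℝ) * Complex.I)).im = lam * (sin x * sinh y) := by
        rw [Complex.cos_add_mul_I, ← Complex.ofReal_cos, ← Complex.ofReal_sin,
          ← Complex.ofReal_sinh, ← Complex.ofReal_cosh]
        simp [-Complex.ofReal_sin, -Complex.ofReal_cos, -Complex.ofReal_sinh,
          -Complex.ofReal_cosh]
      have e : -(K : ℂ) = ((-K : ℝ) : ℂ) := by simp
      rw [e, Complex.re_ofReal_mul, Complex.exp_re, im]
      have sy : 0 ≤ sinh y := Real.sinh_nonneg_iff.2 hy
      have hp : 0 ≤ lam * sinh y := by positivity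
      have habs : |lam * (sin x * sinh y)| ≤ π / 2 := by
        have : lam * (sin x * sinh y) = sin x * (lam * sinh y) := by ring
        rw [this, abs_mul, abs_of_nonneg hp]
        nlinarith [Real.abs_sin_le_one x, abs_nonneg (sin x)]
      have := Real.cos_nonneg_of_neg_pi_div_two_le_of_le (abs_le.1 habs).1 (abs_le.1 habs).2
      have h3 := mul_nonneg (Real.exp_pos (lam * Complex.cos (x + (-y : ℝ) * Complex.I)).re).le this
      nlinarith
    rw [a1, Real.exp_nat_mul]
    exact mul_le_of_le_one_right (by positivity) (Real.exp_le_one_iff.2 a2)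
  have := intervalIntegral.norm_integral_le_of_norm_le_const hb
  refine this.trans (le_of_eq ?_)
  rw [abs_of_nonneg (by linarith [Real.pi_pos])]
  ring

open Real in
lemma expansion (h : ℝ → ℝ) (hc : Continuous h) (r : ℝ) (hr0 : 0 ≤ r) (hr : r < 1)
    (hb : ∀ n : ℕ, |∫ x in (0:ℝ)..π, h (cos x) * cos (n * x)| ≤ π * r ^ n) (t : ℝ) :
    HasSum (fun n : ℕ => chebCoeff h n * cos (n * t)) (h (cos t)) := by
  have : Fact (0 < 2 * π) := ⟨by positivity⟩
  set I : ℤ → ℝ := fun m => ∫ x in (0:ℝ)..π, h (cos x) * cos (m * x) with hI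
  have hIneg : ∀ m, I (-m) = I m := by intro m; simp [hI]
  have hper : Function.Periodic (fun x : ℝ => (h (cos x) : ℂ)) (2 * π) := by
    intro x; simp
  let f : C(AddCircle (2 * π), ℂ) := ⟨hper.lift, by
    refine Continuous.quotient_lift ?_ _
    fun_prop⟩
  have hf : ∀ x : ℝ, f (x : AddCircle (2 * π)) = (h (cos x) : ℂ) := fun x => hper.lift_coe x
  have hcoef : ∀ m : ℤ, fourierCoeff f m = ((I m / π : ℝ) : ℂ) := by
    intro m
    rw [fourierCoeff_eq_intervalIntegral f m (-π)]
    have e : -π + 2 * π = π := by ring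
    rw [e]
    have := int_even h hc m
    have e2 : ∀ x : ℝ, (fourier (-m) (x : AddCircle (2 * π)) : ℂ) • f (x : AddCircle (2 * π))
        = Complex.exp (-Complex.I * m * x) * (h (cos x) : ℂ) := by
      intro x
      rw [hf, fourier_coe_apply, smul_eq_mul]
      congr 2
      have : (π : ℂ) ≠ 0 := by exact_mod_cast Real.pi_ne_zero
      push_cast
      field_simp
    simp only [e2]
    rw [this, Complex.real_smul]
    have : (π : ℂ) ≠ 0 := by exact_mod_cast Real.pi_ne_zero
    simp only [hI]
    push_cast
    field_simp
  have hIb : ∀ n : ℕ, ‖((I n / π : ℝ) : ℂ)‖ ≤ r ^ n := by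
    intro n
    rw [Complex.norm_real, norm_div, Real.norm_eq_abs, Real.norm_eq_abs, abs_of_pos Real.pi_pos,
      div_le_iff₀ Real.pi_pos, mul_comm]
    simpa [hI] using hb n
  have hgeo := summable_geometric_of_lt_one hr0 hr
  have hsum : Summable (fourierCoeff f) := by
    refine Summable.of_nat_of_neg ?_ ?_
    · refine Summable.of_norm_bounded hgeo fun n => ?_
      rw [hcoef]; exact hIb n
    · refine Summable.of_norm_bounded hgeo fun n => ?_
      rw [hcoef, hIneg]; exact hIb n
  have hs := (has_pointwise_sum_fourier_series_of_summable hsum (t : AddCircle (2 * π))).nat_add_neg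
  rw [hf] at hs
  have hs2 := hs.add (hasSum_ite_eq (0 : ℕ) (-((I 0 / π : ℝ) : ℂ)))
  have z : ((h (cos t) : ℂ)) + fourierCoeff f 0 • fourier 0 (t : AddCircle (2 * π))
      + (-((I 0 / π : ℝ) : ℂ)) = (h (cos t) : ℂ) := by
    rw [hcoef]; simp
  rw [z] at hs2
  rw [← Complex.hasSum_ofReal]
  convert hs2 using 2 with n
  have hπ : (π : ℂ) ≠ 0 := by exact_mod_cast Real.pi_ne_zero
  have ef : ∀ m : ℤ, fourier m (t : AddCircle (2 * π)) = Complex.exp (m * t * Complex.I) := by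
    intro m
    rw [fourier_coe_apply]
    congr 1
    push_cast
    field_simp
  rw [hcoef, hcoef, hIneg, ef, ef]
  have hcs : Complex.exp (((n : ℤ) : ℂ) * t * Complex.I) + Complex.exp (((-(n : ℤ) : ℤ) : ℂ) * t * Complex.I)
     = 2 * Complex.cos (n * t) := by
    rw [Complex.cos]; push_cast; ring_nf
  rw [← smul_add, hcs]
  by_cases h0 : n = 0
  · subst h0
    simp [chebCoeff, hI]
    field_simp
    ring
  · simp only [chebCoeff, h0, hI, if_false, smul_eq_mul]
    push_cast
    field_simp
    ring

open Real in
lemma trunc_bound (K lam y : ℝ) (hK : 0 < K) (hl : 0 < lam) (hy : 0 < y)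
    (hs : lam * sinh y ≤ π / 2) (L : ℕ) (x : ℝ) (hx : x ∈ Set.Icc (-1 : ℝ) 1) :
    |exp (-K * exp (lam * x)) - chebTrunc (fun y => exp (-K * exp (lam * y))) L x|
      ≤ 2 * exp (-y) ^ (L + 1) / (1 - exp (-y)) := by
  set h : ℝ → ℝ := fun y => exp (-K * exp (lam * y)) with hh
  have hc : Continuous h := by simp only [hh]; fun_prop
  have hr0 : 0 ≤ exp (-y) := (exp_pos _).le
  have hr : exp (-y) < 1 := by simpa using hy
  have hb : ∀ n : ℕ, |∫ x in (0:ℝ)..π, h (cos x) * cos (n * x)| ≤ π * exp (-y) ^ n := by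
    intro n
    have h1 := shift_bound K lam y hK hl hy.le hs n
    have h2 := int_even h hc n
    simp only [hh] at h2
    rw [h2, norm_mul, Complex.norm_real, Real.norm_eq_abs] at h1
    simp only [Complex.norm_ofNat, Int.cast_natCast] at h1
    simp only [hh]
    linarith
  have hcb : ∀ n : ℕ, |chebCoeff h n| ≤ 2 * exp (-y) ^ n := by
    intro n
    have := hb n
    unfold chebCoeff
    have hp := Real.pi_pos
    have h3 : (1 / π) * |∫ x in (0:ℝ)..π, h (cos x) * cos (n * x)| ≤ exp (-y) ^ n := by
      rw [one_div, inv_mul_le_iff₀ hp]; exact this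
    have h4 : 0 ≤ exp (-y) ^ n := by positivity
    split_ifs with h0
    · subst h0
      rw [abs_mul, abs_of_pos (by positivity)]
      simp at h3 ⊢
      linarith
    · rw [abs_mul, abs_of_pos (by positivity)]
      have : 2 / π = 2 * (1 / π) := by ring
      rw [this]; linarith
  have hcos := Real.cos_arccos hx.1 hx.2
  set t := Real.arccos x
  have hS := expansion h hc _ hr0 hr hb t
  have hT : chebTrunc h L x = ∑ j ∈ Finset.range (L + 1), chebCoeff h j * cos (j * t) := by
    unfold chebTrunc
    refine Finset.sum_congr rfl fun j _ => ?_
    rw [← hcos, Polynomial.Chebyshev.T_real_cos]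
    simp
  have hS2 := (hasSum_nat_add_iff' (L + 1)).2 hS
  rw [← hT, hcos] at hS2
  have hg := ((hasSum_geometric_of_lt_one hr0 hr).mul_left (2 * exp (-y) ^ (L + 1)))
  rw [← div_eq_mul_inv] at hg
  rw [← Real.norm_eq_abs]
  change ‖h x - chebTrunc h L x‖ ≤ _
  rw [← hS2.tsum_eq]
  refine tsum_of_norm_bounded hg fun n => ?_
  rw [Real.norm_eq_abs, abs_mul]
  have := hcb (n + (L + 1))
  have h5 : 2 * exp (-y) ^ (n + (L + 1)) = 2 * exp (-y) ^ (L + 1) * exp (-y) ^ n := by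
    rw [pow_add]; ring
  rw [← h5]
  exact (mul_le_of_le_one_right (abs_nonneg _) (Real.abs_cos_le_one _)).trans this

/-- Lemma 9 / `lem:chebyshev_approximation`. For
`h(x) = exp(-K e^{λx})` on `[-1,1]` with `K, λ > 0`, the degree-`L` Chebyshev truncation
satisfies `‖h - P_L‖_∞ ≤ ε` as soon as `L ≥ C (log(1/ε) + λ log((λ+1)/ε))`; in
particular the required degree is independent of `K`. -/
theorem stmt12 :
    ∃ C : ℝ, 0 < C ∧
      ∀ (K lam ε : ℝ) (L : ℕ),
        0 < K → 0 < lam → ε ∈ Set.Ioo (0 : ℝ) 1 →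
        C * (Real.log (1 / ε) + lam * Real.log ((lam + 1) / ε)) ≤ (L : ℝ) →
        ∀ x ∈ Set.Icc (-1 : ℝ) 1,
          |Real.exp (-K * Real.exp (lam * x)) -
            chebTrunc (fun y => Real.exp (-K * Real.exp (lam * y))) L x| ≤ ε := by
  refine ⟨4, by norm_num, ?_⟩
  rintro K lam ε L hK hl ⟨hε0, hε1⟩ hL x hx
  have hlog1 : 0 < Real.log (1 / ε) := Real.log_pos (by rw [lt_div_iff₀ hε0]; linarith)
  have hlog2 : 0 < Real.log ((lam + 1) / ε) := Real.log_pos (by rw [lt_div_iff₀ hε0]; linarith)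
  have hprod := mul_pos hl hlog2
  have hLpos : (0:ℝ) < L := by linarith
  have hpi := Real.pi_gt_three
  rcases le_total lam 1 with h1 | h1
  · have hy : 0 < Real.log 3 := Real.log_pos (by norm_num)
    refine (trunc_bound K lam (Real.log 3) hK hl hy ?_ L x hx).trans ?_
    · rw [Real.sinh_log (by norm_num)]
      norm_num
      linarith
    · rw [Real.exp_neg, Real.exp_log (by norm_num)]
      have e : 2 * (3:ℝ)⁻¹ ^ (L + 1) / (1 - 3⁻¹) = (3⁻¹) ^ L := by
        rw [pow_succ]; ring
      rw [e, ← Real.log_le_log_iff (by positivity) hε0, Real.log_pow, Real.log_inv]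
      rw [one_div, Real.log_inv] at hL hlog1
      have : 1 ≤ Real.log 3 := by
        rw [Real.le_log_iff_exp_le (by norm_num)]
        linarith [Real.exp_one_lt_d9]
      nlinarith
  · have hρ : 0 < 1 + 1 / lam := by positivity
    have hy : 0 < Real.log (1 + 1 / lam) := Real.log_pos (by simpa using hl)
    refine (trunc_bound K lam (Real.log (1 + 1 / lam)) hK hl hy ?_ L x hx).trans ?_
    · rw [Real.sinh_log hρ]
      have : lam * ((1 + 1 / lam - (1 + 1 / lam)⁻¹) / 2) = (2 * lam + 1) / (2 * (lam + 1)) := by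
        field_simp
        ring
      rw [this]
      have : (2 * lam + 1) / (2 * (lam + 1)) ≤ 1 := by
        rw [div_le_one (by positivity)]; linarith
      linarith
    · rw [Real.exp_neg, Real.exp_log hρ]
      have e : 2 * (1 + 1 / lam)⁻¹ ^ (L + 1) / (1 - (1 + 1 / lam)⁻¹)
          = 2 * lam * (1 + 1 / lam)⁻¹ ^ L := by
        rw [pow_succ]
        have : (1 + 1 / lam)⁻¹ = lam / (lam + 1) := by field_simp
        rw [this]
        have : 1 - lam / (lam + 1) = 1 / (lam + 1) := by field_simp; ring
        rw [this]
        field_simp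
      rw [e]
      have hle : (1 + 1 / lam)⁻¹ ^ L ≤ (ε / (lam + 1)) ^ 2 := by
        rw [← Real.log_le_log_iff (by positivity) (by positivity), Real.log_pow, Real.log_pow,
          Real.log_inv]
        have a := Real.one_sub_inv_le_log_of_pos hρ
        have b : 1 - (1 + 1 / lam)⁻¹ = 1 / (lam + 1) := by field_simp; ring
        rw [b] at a
        have c : Real.log (ε / (lam + 1)) = - Real.log ((lam + 1) / ε) := by
          rw [← Real.log_inv, inv_div]
        rw [c]
        have d : 2 * Real.log ((lam + 1) / ε) ≤ L * (1 / (lam + 1)) := by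
          rw [mul_one_div, le_div_iff₀ (by positivity)]
          nlinarith
        have := mul_le_mul_of_nonneg_left a hLpos.le
        push_cast
        linarith
      calc 2 * lam * (1 + 1 / lam)⁻¹ ^ L ≤ 2 * lam * (ε / (lam + 1)) ^ 2 := by gcongr
        _ = ε * (ε * (2 * lam) / (lam + 1) ^ 2) := by rw [div_pow]; ring
        _ ≤ ε * 1 := by
          gcongr
          rw [div_le_one (by positivity)]
          nlinarith [sq_nonneg lam]
        _ = ε := mul_one _
end

section
/- Let μ_1, μ_2 ∈ ℝ and let G_1, G_2 be probability measures on [0,∞). Then H²( f_{μ_1,G_1}, f_{μ_2,G_2} ) ≥ (1/4) · H²( f_{|μ_1−μ_2|, G_1}, f_{−|μ_1−μ_2|, G_1} ). -/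
open MeasureTheory ProbabilityTheory
open scoped ENNReal NNReal

lemma aux_meas : Measurable (fun p : ℝ × ℝ => (1 / p.2) * stdNormalPDF (p.1 / p.2)) := by
  unfold stdNormalPDF
  fun_prop

lemma aux_int_pdf : Integrable stdNormalPDF := by
  have h := (integrable_exp_neg_mul_sq (b := 1/2) (by norm_num)).div_const (Real.sqrt (2 * Real.pi))
  refine h.congr (Filter.Eventually.of_forall fun x => ?_)
  unfold stdNormalPDF
  simp only
  congr 2
  ring

lemma aux_int_s13 (G : Measure ℝ) [IsProbabilityMeasure G] :
    Integrable (mixDensity 0 G) := by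
  have key : Integrable (fun p : ℝ × ℝ => (1 / p.2) * stdNormalPDF (p.1 / p.2))
      ((volume : Measure ℝ).prod G) := by
    rw [integrable_prod_iff' aux_meas.aestronglyMeasurable]
    constructor
    · refine Filter.Eventually.of_forall fun y => ?_
      by_cases hy : y = 0
      · simp [hy]
      · exact (aux_int_pdf.comp_div hy).const_mul (1 / y)
    · refine Integrable.of_bound (C := ∫ x, ‖stdNormalPDF x‖) ?_ ?_
      · exact (aux_meas.norm.stronglyMeasurable.integral_prod_left').aestronglyMeasurable
      · refine Filter.Eventually.of_forall fun y => ?_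
        have hI : 0 ≤ ∫ x, ‖stdNormalPDF x‖ := integral_nonneg fun _ => norm_nonneg _
        simp only [norm_mul]
        rw [integral_const_mul, Measure.integral_comp_div (fun x => ‖stdNormalPDF x‖) y]
        by_cases hy : y = 0
        · simpa [hy] using hI
        · have : ‖1 / y‖ * |y| = 1 := by
            rw [Real.norm_eq_abs, ← abs_mul]; simp [hy]
          rw [smul_eq_mul, ← mul_assoc, this, one_mul, Real.norm_of_nonneg hI]
  have := key.integral_prod_left
  unfold mixDensity
  simpa using this

lemma aux_shift (μ : ℝ) (G : Measure ℝ) (x : ℝ) :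
    mixDensity μ G x = mixDensity 0 G (x - μ) := by
  simp [mixDensity]

lemma aux_even (G : Measure ℝ) (x : ℝ) :
    mixDensity 0 G (-x) = mixDensity 0 G x := by
  simp [mixDensity, stdNormalPDF, neg_div]

lemma aux_memLp (G : Measure ℝ) [IsProbabilityMeasure G] :
    MemLp (fun x => Real.sqrt (mixDensity 0 G x)) 2 := by
  have h := aux_int_s13 G
  have hm : AEStronglyMeasurable (fun x => Real.sqrt (mixDensity 0 G x)) volume :=
    Real.continuous_sqrt.comp_aestronglyMeasurable h.1
  rw [memLp_two_iff_integrable_sq hm]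
  refine h.pos_part.congr (Filter.Eventually.of_forall fun x => ?_)
  simp only
  rcases le_total 0 (mixDensity 0 G x) with h0 | h0
  · rw [Real.sq_sqrt h0, max_eq_left h0]
  · rw [Real.sqrt_eq_zero_of_nonpos h0, max_eq_right h0]; norm_num

lemma aux_main_s13 (a b : ℝ → ℝ) (ha : MemLp a 2) (hb : MemLp b 2)
    (ea : ∀ x, a (-x) = a x) (eb : ∀ x, b (-x) = b x) (d : ℝ) :
    (1 / 4) * ∫ x, (a (x - d) - a (x + d)) ^ 2 ≤ ∫ x, (a (x - d) - b x) ^ 2 := by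
  have h1 : MemLp (fun x => a (x - d)) 2 :=
    ha.comp_measurePreserving (measurePreserving_sub_right volume d)
  have h2 : MemLp (fun x => a (x + d)) 2 :=
    ha.comp_measurePreserving (measurePreserving_add_right volume d)
  have i1 : Integrable (fun x => (a (x - d) - b x) ^ 2) := (h1.sub hb).integrable_sq
  have i2 : Integrable (fun x => (a (x + d) - b x) ^ 2) := (h2.sub hb).integrable_sq
  have i3 : Integrable (fun x => (a (x - d) - a (x + d)) ^ 2) := (h1.sub h2).integrable_sq
  have e : ∫ x, (a (x + d) - b x) ^ 2 = ∫ x, (a (x - d) - b x) ^ 2 := by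
    rw [← integral_neg_eq_self]
    congr 1; ext x
    rw [eb, ← ea (x - d)]; congr 3; ring
  have hle : ∫ x, (a (x - d) - a (x + d)) ^ 2 ≤
      ∫ x, (2 * (a (x - d) - b x) ^ 2 + 2 * (a (x + d) - b x) ^ 2) := by
    refine integral_mono i3 ((i1.const_mul 2).add (i2.const_mul 2)) fun x => ?_
    simp only
    nlinarith [sq_nonneg (a (x - d) - b x + (a (x + d) - b x))]
  rw [integral_add (i1.const_mul 2) (i2.const_mul 2), integral_const_mul, integral_const_mul, e]
    at hle
  linarith

/-- Lemma 10 / `lemma:symmetrization`. Symmetrization inequality for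
normal scale mixtures:
`H²(f_{μ₁,G₁}, f_{μ₂,G₂}) ≥ (1/4) H²(f_{|μ₁-μ₂|,G₁}, f_{-|μ₁-μ₂|,G₁})`. -/
theorem stmt13 (μ₁ μ₂ : ℝ) (G₁ G₂ : Measure ℝ)
    (hG₁ : IsProbabilityMeasure G₁) (hG₂ : IsProbabilityMeasure G₂)
    (hG₁supp : G₁ (Set.Iio 0) = 0) (hG₂supp : G₂ (Set.Iio 0) = 0) :
    (1 / 4) * hellingerSq (mixDensity |μ₁ - μ₂| G₁) (mixDensity (-|μ₁ - μ₂|) G₁) ≤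
      hellingerSq (mixDensity μ₁ G₁) (mixDensity μ₂ G₂) := by
  set a : ℝ → ℝ := fun x => Real.sqrt (mixDensity 0 G₁ x) with ha
  set b : ℝ → ℝ := fun x => Real.sqrt (mixDensity 0 G₂ x) with hb
  have h := aux_main_s13 a b (aux_memLp G₁) (aux_memLp G₂)
    (fun x => by simp only [ha, aux_even]) (fun x => by simp only [hb, aux_even]) (μ₁ - μ₂)
  have e1 : hellingerSq (mixDensity μ₁ G₁) (mixDensity μ₂ G₂)
      = ∫ x, (a (x - (μ₁ - μ₂)) - b x) ^ 2 := by
    rw [← integral_sub_right_eq_self (fun x => (a (x - (μ₁ - μ₂)) - b x) ^ 2) μ₂]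
    unfold hellingerSq
    congr 1; ext x
    rw [aux_shift μ₁, aux_shift μ₂]
    simp only [ha, hb]
    rw [show x - μ₂ - (μ₁ - μ₂) = x - μ₁ by ring]
  have e2 : hellingerSq (mixDensity |μ₁ - μ₂| G₁) (mixDensity (-|μ₁ - μ₂|) G₁)
      = ∫ x, (a (x - (μ₁ - μ₂)) - a (x + (μ₁ - μ₂))) ^ 2 := by
    unfold hellingerSq
    congr 1; ext x
    rw [aux_shift |μ₁ - μ₂|, aux_shift (-|μ₁ - μ₂|)]
    rcases abs_cases (μ₁ - μ₂) with ⟨h, _⟩ | ⟨h, _⟩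
    · rw [h, sub_neg_eq_add]
    · rw [h, neg_neg, sub_neg_eq_add, ← neg_sq, neg_sub]
  rw [e1, e2]
  exact h
end

section
/- Let X_1,…,X_n ∈ ℝ with X_i ≠ 0 for all i, and let Ĝ be any maximizer of G ↦ ∑_{i=1}^n log f_{0,G}(X_i) over all probability measures G on (0,∞) (the nonparametric MLE). Then Ĝ exists, is unique, is a discrete measure whose number of atoms is at most the cardinality of {|X_1|,…,|X_n|}, and its support is contained in [min_{i∈[n]} |X_i|, max_{i∈[n]} |X_i|]. -/
open MeasureTheory ProbabilityTheory
open scoped ENNReal NNReal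

/-- `G` is a nonparametric maximum likelihood estimator (NPMLE): a probability measure
on `(0, ∞)` maximizing the centered mixture log-likelihood of the data `X`. -/
def IsNPMLE {n : ℕ} (X : Fin n → ℝ) (G : Measure ℝ) : Prop :=
  IsProbabilityMeasure G ∧ G (Set.Ioi 0)ᶜ = 0 ∧
    ∀ G' : Measure ℝ, IsProbabilityMeasure G' → G' (Set.Ioi 0)ᶜ = 0 →
      logLik X 0 G' ≤ logLik X 0 G


noncomputable def kk (x σ : ℝ) : ℝ := (1 / σ) * stdNormalPDF ((x - 0) / σ)

lemma kk_pos (x : ℝ) {σ : ℝ} (h : 0 < σ) : 0 < kk x σ := by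
  unfold kk stdNormalPDF; positivity

lemma kk_eq (x : ℝ) {σ : ℝ} (h : 0 < σ) :
    kk x σ = (√(2 * Real.pi))⁻¹ * (√((σ ^ 2)⁻¹) * Real.exp (-(x ^ 2 / 2) * (σ ^ 2)⁻¹)) := by
  unfold kk stdNormalPDF
  rw [Real.sqrt_inv, Real.sqrt_sq h.le]
  have : -((x - 0) / σ) ^ 2 / 2 = -(x ^ 2 / 2) * (σ ^ 2)⁻¹ := by
    field_simp; ring
  rw [this]; field_simp

lemma kk_lt (x : ℝ) {σ σ' : ℝ} (h : 0 < σ) (h' : 0 < σ') (hne : σ ≠ σ')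
    (hx : 0 ≤ (x ^ 2 - σ' ^ 2) * ((σ ^ 2)⁻¹ - (σ' ^ 2)⁻¹)) : kk x σ < kk x σ' := by
  have hp := kk_pos x h
  have hp' := kk_pos x h'
  have hs : ∀ {s : ℝ}, 0 < s →
      kk x s ^ 2 = (2 * Real.pi)⁻¹ * ((s ^ 2)⁻¹ * Real.exp (-(x ^ 2) * (s ^ 2)⁻¹)) := by
    intro s hs
    rw [kk_eq x hs, mul_pow, mul_pow, inv_pow, Real.sq_sqrt (by positivity),
      Real.sq_sqrt (by positivity), ← Real.exp_nat_mul]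
    congr 3; push_cast; ring
  refine lt_of_pow_lt_pow_left₀ 2 hp'.le ?_
  rw [hs h, hs h']
  refine mul_lt_mul_of_pos_left ?_ (by positivity)
  have hρ : σ' ^ 2 / σ ^ 2 - 1 ≠ 0 := by
    intro hc
    have : σ' ^ 2 / σ ^ 2 = 1 := by linarith
    rw [div_eq_one_iff_eq (by positivity)] at this
    exact hne ((pow_left_inj₀ h.le h'.le two_ne_zero).1 this.symm)
  have h1 := Real.add_one_lt_exp hρ
  have h2 : σ' ^ 2 / σ ^ 2 - 1 ≤ x ^ 2 * (σ ^ 2)⁻¹ - x ^ 2 * (σ' ^ 2)⁻¹ := by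
    have : (x ^ 2 - σ' ^ 2) * ((σ ^ 2)⁻¹ - (σ' ^ 2)⁻¹) =
      x ^ 2 * (σ ^ 2)⁻¹ - x ^ 2 * (σ' ^ 2)⁻¹ - (σ' ^ 2 / σ ^ 2 - 1) := by field_simp
    linarith
  have h3 := h1.trans_le (Real.exp_le_exp.2 h2)
  have h4 : Real.exp (x ^ 2 * (σ ^ 2)⁻¹ - x ^ 2 * (σ' ^ 2)⁻¹) * Real.exp (-(x ^ 2) * (σ ^ 2)⁻¹)
      = Real.exp (-(x ^ 2) * (σ' ^ 2)⁻¹) := by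
    rw [← Real.exp_add]; congr 1; ring
  rw [← h4]
  have h5 := mul_lt_mul_of_pos_right h3 (Real.exp_pos (-(x ^ 2) * (σ ^ 2)⁻¹))
  have h6 := mul_lt_mul_of_pos_left h5 (show 0 < (σ' ^ 2)⁻¹ by positivity)
  refine lt_of_eq_of_lt ?_ h6
  field_simp; ring

lemma kk_le (x : ℝ) (hx : x ≠ 0) {σ : ℝ} (h : 0 < σ) : kk x σ ≤ kk x |x| := by
  by_cases hc : σ = |x|
  · rw [hc]
  · exact (kk_lt x h (abs_pos.2 hx) hc (by simp)).le

lemma kk_lt_left (x : ℝ) {σ σ' : ℝ} (h : 0 < σ) (h1 : σ < σ') (h2 : σ' ≤ |x|) :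
    kk x σ < kk x σ' := by
  have h' := h.trans h1
  refine kk_lt x h h' h1.ne (mul_nonneg ?_ ?_)
  · rw [← sq_abs x]; have := pow_le_pow_left₀ h'.le h2 2; linarith
  · have := inv_anti₀ (by positivity) (pow_le_pow_left₀ h.le h1.le 2); linarith

lemma kk_lt_right (x : ℝ) {σ σ' : ℝ} (h' : 0 < σ') (h1 : σ' < σ) (h2 : |x| ≤ σ') :
    kk x σ < kk x σ' := by
  have h := h'.trans h1
  refine kk_lt x h h' h1.ne' (mul_nonneg_of_nonpos_of_nonpos ?_ ?_)
  · rw [← sq_abs x]; have := pow_le_pow_left₀ (abs_nonneg x) h2 2; linarith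
  · have := inv_anti₀ (by positivity) (pow_le_pow_left₀ h'.le h1.le 2); linarith

lemma kk_meas (x : ℝ) : Measurable (kk x) := by
  unfold kk stdNormalPDF; fun_prop

lemma kk_cont (x : ℝ) : ContinuousOn (kk x) (Set.Ioi 0) := by
  unfold kk stdNormalPDF
  have : ∀ s ∈ Set.Ioi (0:ℝ), s ≠ 0 := fun s hs => ne_of_gt hs
  fun_prop (disch := assumption)

lemma kk_int (x : ℝ) (hx : x ≠ 0) (G : Measure ℝ) [IsFiniteMeasure G] (hG : G (Set.Ioi 0)ᶜ = 0) :
    Integrable (kk x) G := by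
  refine Integrable.of_bound (kk_meas x).aestronglyMeasurable (kk x |x|) ?_
  have : ∀ᵐ σ ∂G, σ ∈ Set.Ioi (0:ℝ) := hG
  filter_upwards [this] with σ hσ
  rw [Real.norm_of_nonneg (kk_pos x hσ).le]
  exact kk_le x hx hσ

lemma mix_eq (G : Measure ℝ) (x : ℝ) : mixDensity 0 G x = ∫ σ, kk x σ ∂G := rfl

lemma mix_pos (x : ℝ) (hx : x ≠ 0) (G : Measure ℝ) [IsProbabilityMeasure G]
    (hG : G (Set.Ioi 0)ᶜ = 0) : 0 < mixDensity 0 G x := by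
  rw [mix_eq]
  have hae : ∀ᵐ σ ∂G, σ ∈ Set.Ioi (0:ℝ) := hG
  rw [integral_pos_iff_support_of_nonneg_ae _ (kk_int x hx G hG)]
  · have : Set.Ioi (0:ℝ) ⊆ Function.support (kk x) := fun s hs => (kk_pos x hs).ne'
    refine lt_of_lt_of_le ?_ (measure_mono this)
    rw [(prob_compl_eq_zero_iff measurableSet_Ioi).1 hG]; simp
  · filter_upwards [hae] with σ hσ using (kk_pos x hσ).le

/-- convex combination of measures -/
noncomputable def cmb (t : ℝ) (G H : Measure ℝ) : Measure ℝ :=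
  ENNReal.ofReal (1 - t) • G + ENNReal.ofReal t • H

lemma cmb_prob {t : ℝ} (h0 : 0 ≤ t) (h1 : t ≤ 1) (G H : Measure ℝ) [IsProbabilityMeasure G]
    [IsProbabilityMeasure H] : IsProbabilityMeasure (cmb t G H) := by
  constructor
  simp [cmb]
  rw [← ENNReal.ofReal_add (by linarith) h0]; simp

lemma cmb_null {t : ℝ} (G H : Measure ℝ) {A : Set ℝ} (hG : G A = 0) (hH : H A = 0) :
    cmb t G H A = 0 := by
  simp [cmb, hG, hH]

lemma cmb_mix {t : ℝ} (h0 : 0 ≤ t) (h1 : t ≤ 1) (G H : Measure ℝ) [IsProbabilityMeasure G]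
    [IsProbabilityMeasure H] (hG : G (Set.Ioi 0)ᶜ = 0) (hH : H (Set.Ioi 0)ᶜ = 0)
    (x : ℝ) (hx : x ≠ 0) :
    mixDensity 0 (cmb t G H) x = (1 - t) * mixDensity 0 G x + t * mixDensity 0 H x := by
  simp only [mix_eq, cmb]
  rw [integral_add_measure, integral_smul_measure, integral_smul_measure,
    ENNReal.toReal_ofReal (by linarith), ENNReal.toReal_ofReal h0, smul_eq_mul, smul_eq_mul]
  · exact (kk_int x hx G hG).smul_measure ENNReal.ofReal_ne_top
  · exact (kk_int x hx H hH).smul_measure ENNReal.ofReal_ne_top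

lemma foc {n : ℕ} (y v : Fin n → ℝ) (hy : ∀ i, 0 < y i) (hv : ∀ i, 0 < v i)
    (h : ∀ t : ℝ, 0 < t → t < 1 →
      ∑ i, Real.log ((1 - t) * y i + t * v i) ≤ ∑ i, Real.log (y i)) :
    ∑ i, v i / y i ≤ n := by
  have key : ∀ᶠ t in nhdsWithin (0:ℝ) (Set.Ioi 0),
      ∑ i, (v i - y i) / ((1 - t) * y i + t * v i) ≤ 0 := by
    filter_upwards [Ioo_mem_nhdsGT (show (0:ℝ) < 1 by norm_num)] with t ht
    have h1 := h t ht.1 ht.2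
    have h2 : t * ∑ i, (v i - y i) / ((1 - t) * y i + t * v i) ≤ 0 := by
      rw [Finset.mul_sum]
      refine le_trans (Finset.sum_le_sum (g := fun i => Real.log ((1 - t) * y i + t * v i) - Real.log (y i)) ?_) ?_
      · intro i _
        have hyi := hy i
        have hvi := hv i
        have ht1 : 0 < 1 - t := by linarith [ht.2]
        have ht0 := ht.1
        have hz : 0 < (1 - t) * y i + t * v i := by positivity
        have := Real.log_le_sub_one_of_pos (div_pos hyi hz)
        rw [Real.log_div hyi.ne' hz.ne'] at this
        have e : t * ((v i - y i) / ((1 - t) * y i + t * v i)) = 1 - y i / ((1 - t) * y i + t * v i) := by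
          field_simp; ring
        linarith
      · rw [Finset.sum_sub_distrib]; linarith
    by_contra hc
    push Not at hc
    have := mul_pos ht.1 hc
    linarith
  have hc : Filter.Tendsto (fun t : ℝ => ∑ i, (v i - y i) / ((1 - t) * y i + t * v i))
      (nhdsWithin (0:ℝ) (Set.Ioi 0)) (nhds (∑ i, (v i - y i) / ((1 - 0) * y i + 0 * v i))) := by
    refine tendsto_nhdsWithin_of_tendsto_nhds ?_
    refine tendsto_finsetSum _ fun i _ => ?_
    have : ContinuousAt (fun t : ℝ => (v i - y i) / ((1 - t) * y i + t * v i)) 0 := by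
      refine ContinuousAt.div (by fun_prop) (by fun_prop) ?_
      simpa using (hy i).ne'
    exact this
  have h3 := le_of_tendsto hc key
  have h4 : ∑ i, (v i - y i) / ((1 - 0) * y i + 0 * v i) = ∑ i, v i / y i - n := by
    have : ∀ i, (v i - y i) / ((1 - 0) * y i + 0 * v i) = v i / y i - 1 := by
      intro i; have := (hy i).ne'; rw [sub_zero, one_mul, zero_mul, add_zero, sub_div, div_self this]
    simp only [this]; simp
  linarith

lemma rolle (I : Set ℝ) (hI : I.OrdConnected) (g g' : ℝ → ℝ)
    (hg : ∀ x ∈ I, HasDerivAt g (g' x) x) (Z : Finset ℝ) (hZ : ∀ z ∈ Z, z ∈ I ∧ g z = 0) :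
    ∃ W : Finset ℝ, Z.card ≤ W.card + 1 ∧ Disjoint Z W ∧ ∀ w ∈ W, w ∈ I ∧ g' w = 0 := by
  obtain hk | ⟨k, hk⟩ : Z.card = 0 ∨ ∃ k, Z.card = k + 1 := by
    cases h : Z.card <;> simp
  · exact ⟨∅, by simp [hk], by simp, by simp⟩
  let z := Z.orderEmbOfFin hk
  have hz : ∀ i, z i ∈ Z := fun i => Z.orderEmbOfFin_mem hk i
  have hex : ∀ i : Fin k, ∃ w ∈ Set.Ioo (z i.castSucc) (z i.succ), g' w = 0 := by
    intro i
    have hlt : z i.castSucc < z i.succ := z.strictMono Fin.castSucc_lt_succ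
    have hsub : Set.Icc (z i.castSucc) (z i.succ) ⊆ I := hI.out (hZ _ (hz _)).1 (hZ _ (hz _)).1
    refine exists_hasDerivAt_eq_zero (f := g) hlt ?_ ?_ ?_
    · intro x hx; exact (hg x (hsub hx)).continuousAt.continuousWithinAt
    · rw [(hZ _ (hz _)).2, (hZ _ (hz _)).2]
    · intro x hx; exact hg x (hsub (Set.Ioo_subset_Icc_self hx))
  choose w hw hw0 using hex
  have hwI : ∀ i, w i ∈ I := fun i =>
    hI.out (hZ _ (hz i.castSucc)).1 (hZ _ (hz i.succ)).1 (Set.Ioo_subset_Icc_self (hw i))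
  have hmono : StrictMono w := by
    intro i j hij
    refine (hw i).2.trans_le (le_trans ?_ (hw j).1.le)
    exact z.monotone (by rw [Fin.le_def]; simp; exact hij)
  refine ⟨Finset.univ.image w, ?_, ?_, ?_⟩
  · rw [Finset.card_image_of_injective _ hmono.injective]; simp [hk]
  · rw [Finset.disjoint_right]
    intro a ha haZ
    obtain ⟨i, -, rfl⟩ := Finset.mem_image.1 ha
    have : w i ∈ Set.range z := by rw [Finset.range_orderEmbOfFin]; exact haZ
    obtain ⟨j, hj⟩ := this
    rcases le_or_gt j i.castSucc with h | h
    · have := z.monotone h; have := (hw i).1; linarith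
    · have h' : i.succ ≤ j := by rw [Fin.le_def]; simp; exact h
      have := z.monotone h'; have := (hw i).2; linarith
  · intro a ha
    obtain ⟨i, -, rfl⟩ := Finset.mem_image.1 ha
    exact ⟨hwI i, hw0 i⟩

lemma rolle_exp (I : Set ℝ) (hI : I.OrdConnected) (s : ℝ) (g g' : ℝ → ℝ)
    (hg : ∀ x ∈ I, HasDerivAt g (g' x) x) (Z : Finset ℝ) (hZ : ∀ z ∈ Z, z ∈ I ∧ g z = 0) :
    ∃ W : Finset ℝ, Z.card ≤ W.card + 1 ∧ Disjoint Z W ∧ ∀ w ∈ W, w ∈ I ∧ g' w + s * g w = 0 := by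
  obtain ⟨W, h1, h2, h3⟩ := rolle I hI (fun x => Real.exp (s * x) * g x)
    (fun x => Real.exp (s * x) * (g' x + s * g x)) (fun x hx => by
      have h := (((hasDerivAt_id x).const_mul s).exp).mul (hg x hx)
      refine h.congr_deriv ?_
      simp; ring) Z (fun z hz => ⟨(hZ z hz).1, by simp [(hZ z hz).2]⟩)
  exact ⟨W, h1, h2, fun w hw => ⟨(h3 w hw).1, by simpa [Real.exp_ne_zero] using (h3 w hw).2⟩⟩

lemma expsum_zero (S : Finset ℝ) : ∀ (c : ℝ → ℝ) (Z : Finset ℝ), S.card ≤ Z.card →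
    (∀ z ∈ Z, ∑ a ∈ S, c a * Real.exp (-a * z) = 0) → ∀ a ∈ S, c a = 0 := by
  induction S using Finset.induction_on with
  | empty => simp
  | insert b S hb ih =>
    intro c Z hcard hZ
    rw [Finset.card_insert_of_notMem hb] at hcard
    obtain ⟨W, h1, -, h3⟩ := rolle_exp Set.univ Set.ordConnected_univ b
      (fun z => ∑ a ∈ insert b S, c a * Real.exp (-a * z))
      (fun z => ∑ a ∈ insert b S, c a * (-a * Real.exp (-a * z)))
      (fun x _ => by
        refine HasDerivAt.fun_sum fun a _ => ?_
        have := (((hasDerivAt_id x).const_mul (-a)).exp).const_mul (c a)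
        refine this.congr_deriv ?_
        simp only [id]; ring) Z (fun z hz => ⟨trivial, hZ z hz⟩)
    have h4 := ih (fun a => (b - a) * c a) W (by omega) (fun w hw => by
      have := (h3 w hw).2
      rw [Finset.mul_sum, ← Finset.sum_add_distrib, Finset.sum_insert hb] at this
      rw [← this]
      have e : c b * (-b * Real.exp (-b * w)) + b * (c b * Real.exp (-b * w)) = 0 := by ring
      rw [e, zero_add]
      refine Finset.sum_congr rfl fun a _ => by ring)
    have h5 : ∀ a ∈ S, c a = 0 := by
      intro a ha
      rcases mul_eq_zero.1 (h4 a ha) with h | h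
      · exact absurd (sub_eq_zero.1 h) (fun e => hb (e ▸ ha))
      · exact h
    intro a ha
    rcases Finset.mem_insert.1 ha with rfl | ha
    · obtain ⟨z, hz⟩ : Z.Nonempty := Finset.card_pos.1 (by omega)
      have := hZ z hz
      rw [Finset.sum_insert hb, Finset.sum_eq_zero (fun a ha => by rw [h5 a ha, zero_mul])] at this
      simpa [Real.exp_ne_zero] using this
    · exact h5 a ha

open Polynomial in
noncomputable def nextQ (s : ℝ) (Q : ℝ[X]) : ℝ[X] := C s * Q - C (1/2) * (X * Q) - X * (X * derivative Q)

noncomputable def hh (S : Finset ℝ) (c : ℝ → ℝ) (Q : Polynomial ℝ) (x : ℝ) : ℝ :=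
  ∑ a ∈ S, c a * Real.exp (-a * x) + (√x)⁻¹ * Q.eval x⁻¹

noncomputable def hh' (S : Finset ℝ) (c : ℝ → ℝ) (Q : Polynomial ℝ) (x : ℝ) : ℝ :=
  ∑ a ∈ S, c a * (-a * Real.exp (-a * x)) + (√x)⁻¹ * (nextQ 0 Q).eval x⁻¹

lemma hh_deriv (S c Q) (x : ℝ) (hx : 0 < x) : HasDerivAt (hh S c Q) (hh' S c Q x) x := by
  unfold hh hh'
  refine HasDerivAt.fun_add ?_ ?_
  · refine HasDerivAt.fun_sum fun a _ => ?_
    have := (((hasDerivAt_id x).const_mul (-a)).exp).const_mul (c a)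
    refine this.congr_deriv ?_
    simp only [id]; ring
  · have h1 := ((Real.hasDerivAt_sqrt hx.ne').inv (Real.sqrt_pos.2 hx).ne')
    have h2 := (Q.hasDerivAt x⁻¹).comp x (hasDerivAt_inv hx.ne')
    refine (h1.mul h2).congr_deriv ?_
    have hs := Real.sqrt_pos.2 hx
    have hsq : √x ^ 2 = x := Real.sq_sqrt hx.le
    simp only [nextQ, Polynomial.eval_sub, Polynomial.eval_mul, Polynomial.eval_C, Polynomial.eval_X,
      Function.comp, hsq, Pi.inv_apply]
    field_simp
    ring

lemma nextQ_deg (s Q) : (nextQ s Q).natDegree ≤ Q.natDegree + 1 := by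
  unfold nextQ
  refine (Polynomial.natDegree_sub_le _ _).trans (max_le ((Polynomial.natDegree_sub_le _ _).trans
    (max_le ?_ ?_)) ?_)
  · exact (Polynomial.natDegree_C_mul_le _ _).trans (by omega)
  · refine (Polynomial.natDegree_C_mul_le _ _).trans (Polynomial.natDegree_mul_le.trans ?_)
    have := Polynomial.natDegree_X_le (R := ℝ)
    omega
  · by_cases h0 : Q.natDegree = 0
    · rw [Polynomial.derivative_of_natDegree_zero h0]; simp
    · refine Polynomial.natDegree_mul_le.trans ?_
      have h1 := Polynomial.natDegree_mul_le (p := Polynomial.X) (q := Polynomial.derivative Q)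
      have h2 := Polynomial.natDegree_X_le (R := ℝ)
      have h3 := Polynomial.natDegree_derivative_lt h0
      omega

lemma nextQ_ne (s Q) (hQ : Q ≠ 0) : nextQ s Q ≠ 0 := by
  intro h
  have := congrArg (fun P => P.coeff (Q.natDegree + 1)) h
  simp only [nextQ, Polynomial.coeff_sub, Polynomial.coeff_C_mul, Polynomial.coeff_X_mul,
    Polynomial.coeff_zero] at this
  rw [Polynomial.coeff_eq_zero_of_natDegree_lt (Nat.lt_succ_self Q.natDegree)] at this
  have hl : Q.coeff Q.natDegree ≠ 0 := by simpa using hQ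
  have e : (Polynomial.X * Polynomial.derivative Q).coeff Q.natDegree =
      Q.coeff Q.natDegree * Q.natDegree := by
    generalize Q.natDegree = d
    cases d with
    | zero => simp
    | succ d => rw [Polynomial.coeff_X_mul, Polynomial.coeff_derivative]; push_cast; ring
  rw [e] at this
  have h2 : Q.coeff Q.natDegree * (1 / 2 + Q.natDegree) = 0 := by linarith
  rcases mul_eq_zero.1 h2 with h | h
  · exact hl h
  · have : (0:ℝ) ≤ Q.natDegree := Nat.cast_nonneg _
    linarith

lemma hh_step (b S c Q) (hb : b ∉ S) (x : ℝ) :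
    hh' (insert b S) c Q x + b * hh (insert b S) c Q x =
      hh S (fun a => (b - a) * c a) (nextQ b Q) x := by
  unfold hh' hh
  rw [Finset.sum_insert hb, Finset.sum_insert hb]
  have : ∑ a ∈ S, (b - a) * c a * Real.exp (-a * x) = ∑ a ∈ S, c a * (-a * Real.exp (-a * x)) +
      b * ∑ a ∈ S, c a * Real.exp (-a * x) := by
    rw [Finset.mul_sum, ← Finset.sum_add_distrib]
    refine Finset.sum_congr rfl fun a _ => by ring
  rw [this]
  simp only [nextQ, Polynomial.eval_sub, Polynomial.eval_mul, Polynomial.eval_C, Polynomial.eval_X]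
  ring

lemma hh_count (S : Finset ℝ) : ∀ (c : ℝ → ℝ) (Q : Polynomial ℝ) (_ : Q ≠ 0) (Z : Finset ℝ),
    (∀ z ∈ Z, z ∈ Set.Ioi (0:ℝ) ∧ hh S c Q z = 0) → Z.card ≤ 2 * S.card + Q.natDegree := by
  induction S using Finset.induction_on with
  | empty =>
    intro c Q hQ Z hZ
    have : Z.image (fun z => z⁻¹) ⊆ Q.roots.toFinset := by
      intro w hw
      obtain ⟨z, hz, rfl⟩ := Finset.mem_image.1 hw
      obtain ⟨h1, h2⟩ := hZ z hz
      have := (Real.sqrt_pos.2 h1).ne'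
      simp only [hh, Finset.sum_empty, zero_add, mul_eq_zero, inv_eq_zero, this, false_or] at h2
      simp [hQ, h2]
    have h2 := Finset.card_le_card this
    rw [Finset.card_image_of_injective _ inv_injective] at h2
    have := Multiset.toFinset_card_le Q.roots
    have := Q.card_roots'
    simp; omega
  | insert b S hb ih =>
    intro c Q hQ Z hZ
    obtain ⟨W, h1, -, h3⟩ := rolle_exp (Set.Ioi 0) Set.ordConnected_Ioi b
      (hh (insert b S) c Q) (hh' (insert b S) c Q) (fun x hx => hh_deriv _ _ _ x hx) Z hZ
    have := ih (fun a => (b - a) * c a) (nextQ b Q) (nextQ_ne b Q hQ) W (fun w hw => by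
      rw [← hh_step b S c Q hb]; exact h3 w hw)
    have := nextQ_deg b Q
    rw [Finset.card_insert_of_notMem hb]
    omega

lemma max_count (S : Finset ℝ) (hS : S.Nonempty) (c : ℝ → ℝ) (N : ℝ) (hN : N ≠ 0)
    (hle : ∀ x, 0 < x → hh S c (Polynomial.C N) x ≤ 0) (Z : Finset ℝ)
    (hZ : ∀ z ∈ Z, z ∈ Set.Ioi (0:ℝ) ∧ hh S c (Polynomial.C N) z = 0) : Z.card ≤ S.card := by
  obtain ⟨b, hb⟩ := hS
  obtain ⟨S, hbS, rfl⟩ : ∃ S', b ∉ S' ∧ insert b S' = S :=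
    ⟨S.erase b, by simp, Finset.insert_erase hb⟩
  set Q := Polynomial.C N with hQdef
  have hQ : Q ≠ 0 := by simpa [hQdef] using hN
  obtain ⟨W, h1, h2, h3⟩ := rolle_exp (Set.Ioi 0) Set.ordConnected_Ioi b
    (hh (insert b S) c Q) (hh' (insert b S) c Q) (fun x hx => hh_deriv _ _ _ x hx) Z hZ
  have := hh_count S (fun a => (b - a) * c a) (nextQ b Q) (nextQ_ne b Q hQ) (Z ∪ W) (fun w hw => by
      rw [← hh_step b S c Q hbS]
      rcases Finset.mem_union.1 hw with hw | hw
      · obtain ⟨hz, h0⟩ := hZ w hw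
        refine ⟨hz, ?_⟩
        have hm : IsLocalMax (hh (insert b S) c Q) w := by
          filter_upwards [Ioi_mem_nhds hz] with x hx
          rw [h0]; exact hle x hx
        rw [hm.hasDerivAt_eq_zero (hh_deriv _ _ _ w hz), h0]; simp
      · exact h3 w hw)
  have h4 := nextQ_deg b Q
  have h5 : Q.natDegree = 0 := by simp [hQdef]
  rw [Finset.card_union_of_disjoint h2] at this
  rw [Finset.card_insert_of_notMem hbS]
  omega

lemma Icc_null {a b : ℝ} (ha : 0 < a) {H : Measure ℝ} (h : H (Set.Icc a b)ᶜ = 0) :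
    H (Set.Ioi 0)ᶜ = 0 := by
  refine measure_mono_null ?_ h
  rw [Set.compl_subset_compl]
  intro x hx
  exact ha.trans_le hx.1

lemma exists_Icc {n : ℕ} (X : Fin n → ℝ) (hX : ∀ i, X i ≠ 0) {a b : ℝ} (ha : 0 < a) (hab : a ≤ b) :
    ∃ G : Measure ℝ, IsProbabilityMeasure G ∧ G (Set.Icc a b)ᶜ = 0 ∧
      ∀ H : Measure ℝ, IsProbabilityMeasure H → H (Set.Icc a b)ᶜ = 0 →
        logLik X 0 H ≤ logLik X 0 G := by
  have hcont : ∀ x : ℝ, Continuous (fun σ : Set.Icc a b => kk x σ) := by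
    intro x
    exact (kk_cont x).comp_continuous continuous_subtype_val (fun σ => ha.trans_le σ.2.1)
  have hmap : ∀ (μ : Measure (Set.Icc a b)) (x : ℝ),
      mixDensity 0 (μ.map Subtype.val) x = ∫ σ, kk x σ ∂μ := by
    intro μ x
    rw [mix_eq, integral_map measurable_subtype_coe.aemeasurable (kk_meas x).aestronglyMeasurable]
  have hmapn : ∀ (μ : Measure (Set.Icc a b)), (μ.map Subtype.val) (Set.Icc a b)ᶜ = 0 := by
    intro μ
    rw [Measure.map_apply measurable_subtype_coe measurableSet_Icc.compl]
    convert measure_empty (μ := μ)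
    ext x; simp [x.2.1, x.2.2]
  have : Nonempty (ProbabilityMeasure (Set.Icc a b)) :=
    ⟨⟨Measure.dirac ⟨a, le_rfl, hab⟩, inferInstance⟩⟩
  have hL : Continuous (fun μ : ProbabilityMeasure (Set.Icc a b) =>
      ∑ i, Real.log (∫ σ, kk (X i) σ ∂(μ : Measure (Set.Icc a b)))) := by
    refine continuous_finsetSum _ fun i _ => ?_
    refine Continuous.log ?_ ?_
    · exact ProbabilityMeasure.continuous_integral_continuousMap
        (⟨fun σ => kk (X i) σ, hcont (X i)⟩ : C(Set.Icc a b, ℝ))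
    · intro μ
      rw [← hmap]
      have : IsProbabilityMeasure ((μ : Measure (Set.Icc a b)).map Subtype.val) :=
        Measure.isProbabilityMeasure_map measurable_subtype_coe.aemeasurable
      exact (mix_pos (X i) (hX i) _ (Icc_null ha (hmapn _))).ne'
  obtain ⟨μ, -, hμ⟩ := isCompact_univ.exists_isMaxOn Set.univ_nonempty hL.continuousOn
  refine ⟨(μ : Measure (Set.Icc a b)).map Subtype.val,
    Measure.isProbabilityMeasure_map measurable_subtype_coe.aemeasurable, hmapn _, ?_⟩
  intro H hH hH0
  have hae : ∀ᵐ x ∂H, x ∈ Set.Icc a b := hH0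
  have hr : H.restrict (Set.Icc a b) = H := Measure.restrict_eq_self_of_ae_mem hae
  have hp : IsProbabilityMeasure (H.comap (Subtype.val : Set.Icc a b → ℝ)) := by
    constructor
    rw [comap_subtype_coe_apply measurableSet_Icc]
    rw [Set.image_univ, Subtype.range_coe]
    exact (prob_compl_eq_zero_iff measurableSet_Icc).1 hH0
  have := hμ (Set.mem_univ (⟨_, hp⟩ : ProbabilityMeasure (Set.Icc a b)))
  simp only [Set.mem_ofPred_eq] at this
  unfold logLik
  simp only [hmap]
  refine le_trans (le_of_eq ?_) this
  refine Finset.sum_congr rfl fun i _ => ?_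
  simp only [ProbabilityMeasure.coe_mk]
  rw [integral_subtype_comap measurableSet_Icc (kk (X i)), hr, mix_eq]

noncomputable def DD {n : ℕ} (X y : Fin n → ℝ) (σ : ℝ) : ℝ := ∑ i, kk (X i) σ / y i

lemma DD_int {n : ℕ} (X y : Fin n → ℝ) (hX : ∀ i, X i ≠ 0) (G : Measure ℝ) [IsFiniteMeasure G]
    (hG : G (Set.Ioi 0)ᶜ = 0) : Integrable (DD X y) G := by
  unfold DD
  exact integrable_finsetSum _ fun i _ => (kk_int (X i) (hX i) G hG).div_const _

lemma DD_integral {n : ℕ} (X y : Fin n → ℝ) (hX : ∀ i, X i ≠ 0) (G : Measure ℝ) [IsFiniteMeasure G]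
    (hG : G (Set.Ioi 0)ᶜ = 0) : ∫ σ, DD X y σ ∂G = ∑ i, mixDensity 0 G (X i) / y i := by
  unfold DD
  rw [integral_finsetSum _ fun i _ => (kk_int (X i) (hX i) G hG).div_const _]
  refine Finset.sum_congr rfl fun i _ => ?_
  rw [integral_div, mix_eq]

lemma foc_meas {n : ℕ} (X : Fin n → ℝ) (hX : ∀ i, X i ≠ 0) (G H : Measure ℝ)
    [IsProbabilityMeasure G] [IsProbabilityMeasure H] (hG : G (Set.Ioi 0)ᶜ = 0)
    (hH : H (Set.Ioi 0)ᶜ = 0)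
    (h : ∀ t : ℝ, 0 < t → t < 1 → logLik X 0 (cmb t G H) ≤ logLik X 0 G) :
    ∑ i, mixDensity 0 H (X i) / mixDensity 0 G (X i) ≤ n := by
  refine foc _ _ (fun i => mix_pos _ (hX i) G hG) (fun i => mix_pos _ (hX i) H hH) ?_
  intro t h0 h1
  have := h t h0 h1
  unfold logLik at this
  convert this using 3 with i
  rw [cmb_mix h0.le h1.le G H hG hH _ (hX i)]

lemma dirac_null {s : ℝ} {A : Set ℝ} (hA : MeasurableSet A) (hs : s ∈ A) : Measure.dirac s Aᶜ = 0 := by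
  rw [Measure.dirac_apply' _ hA.compl]; simp [hs]

lemma mix_dirac (x s : ℝ) : mixDensity 0 (Measure.dirac s) x = kk x s := by
  rw [mix_eq, integral_dirac]

/-- strict improvement by projection -/
lemma DD_proj {n : ℕ} (hn : 0 < n) (X y : Fin n → ℝ) (hy : ∀ i, 0 < y i) {a b : ℝ} (ha : 0 < a)
    (hab : a ≤ b) (hXa : ∀ i, a ≤ |X i|) (hXb : ∀ i, |X i| ≤ b) {σ : ℝ} (hσ : 0 < σ)
    (h : σ ∉ Set.Icc a b) : ∃ σ' ∈ Set.Icc a b, DD X y σ < DD X y σ' := by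
  have : Nonempty (Fin n) := ⟨⟨0, hn⟩⟩
  have key : ∀ σ', (∀ i, kk (X i) σ < kk (X i) σ') → DD X y σ < DD X y σ' := by
    intro σ' h
    exact Finset.sum_lt_sum_of_nonempty Finset.univ_nonempty
      fun i _ => div_lt_div_of_pos_right (h i) (hy i)
  by_cases h1 : σ < a
  · exact ⟨a, ⟨le_rfl, hab⟩, key a fun i => kk_lt_left _ hσ h1 (hXa i)⟩
  · have h2 : b < σ := by
      by_contra h2
      exact h ⟨not_lt.1 h1, not_lt.1 h2⟩
    exact ⟨b, ⟨hab, le_rfl⟩, key b fun i => kk_lt_right _ (ha.trans_le hab) h2 (hXb i)⟩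

lemma exists_npmle {n : ℕ} (hn : 0 < n) (X : Fin n → ℝ) (hX : ∀ i, X i ≠ 0) {a b : ℝ} (ha : 0 < a)
    (hab : a ≤ b) (hXa : ∀ i, a ≤ |X i|) (hXb : ∀ i, |X i| ≤ b) : ∃ G, IsNPMLE X G := by
  obtain ⟨G, hGp, hG, hmax⟩ := exists_Icc X hX ha hab
  have hG0 := Icc_null ha hG
  refine ⟨G, hGp, hG0, ?_⟩
  set y := fun i => mixDensity 0 G (X i) with hydef
  have hy : ∀ i, 0 < y i := fun i => mix_pos _ (hX i) G hG0
  have h1 : ∀ s ∈ Set.Icc a b, DD X y s ≤ n := by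
    intro s hs
    have hd := dirac_null measurableSet_Icc hs
    have := foc_meas X hX G (Measure.dirac s) hG0 (Icc_null ha hd) (fun t h0 h1 =>
      hmax _ (cmb_prob h0.le h1.le _ _) (cmb_null _ _ hG hd))
    simp only [mix_dirac] at this
    exact this
  have h2 : ∀ s, 0 < s → DD X y s ≤ n := by
    intro s hs
    by_cases h : s ∈ Set.Icc a b
    · exact h1 s h
    · obtain ⟨s', hs', hlt⟩ := DD_proj hn X y hy ha hab hXa hXb hs h
      exact hlt.le.trans (h1 s' hs')
  intro H hHp hH
  have hae : ∀ᵐ σ ∂H, σ ∈ Set.Ioi (0:ℝ) := hH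
  have h3 : ∑ i, mixDensity 0 H (X i) / y i ≤ n := by
    rw [← DD_integral X y hX H hH]
    refine (integral_mono_ae (DD_int X y hX H hH) (integrable_const (n:ℝ)) ?_).trans (by simp)
    filter_upwards [hae] with s hs using h2 s hs
  have h4 : ∑ i, (Real.log (mixDensity 0 H (X i)) - Real.log (y i)) ≤
      ∑ i, (mixDensity 0 H (X i) / y i - 1) := by
    refine Finset.sum_le_sum fun i _ => ?_
    have hz := mix_pos _ (hX i) H hH
    rw [← Real.log_div hz.ne' (hy i).ne']
    exact Real.log_le_sub_one_of_pos (div_pos hz (hy i))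
  rw [Finset.sum_sub_distrib, Finset.sum_sub_distrib] at h4
  simp at h4
  unfold logLik
  linarith

lemma npmle_foc {n : ℕ} (X : Fin n → ℝ) (hX : ∀ i, X i ≠ 0) {G H : Measure ℝ} (hG : IsNPMLE X G)
    [IsProbabilityMeasure H] (hH : H (Set.Ioi 0)ᶜ = 0) :
    ∑ i, mixDensity 0 H (X i) / mixDensity 0 G (X i) ≤ n := by
  obtain ⟨hp, h0, hmax⟩ := hG
  exact foc_meas X hX G H h0 hH (fun t t0 t1 =>
      hmax _ (cmb_prob t0.le t1.le _ _) (cmb_null _ _ h0 hH))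

lemma npmle_y {n : ℕ} (X : Fin n → ℝ) (hX : ∀ i, X i ≠ 0) {G H : Measure ℝ} (hG : IsNPMLE X G)
    (hH : IsNPMLE X H) (i : Fin n) : mixDensity 0 G (X i) = mixDensity 0 H (X i) := by
  have := hG.1
  have := hH.1
  have h1 := npmle_foc X hX hG hH.2.1
  have h2 := npmle_foc X hX hH hG.2.1
  set u := fun i => mixDensity 0 G (X i)
  set v := fun i => mixDensity 0 H (X i)
  have hu : ∀ i, 0 < u i := fun i => mix_pos _ (hX i) G hG.2.1
  have hv : ∀ i, 0 < v i := fun i => mix_pos _ (hX i) H hH.2.1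
  have e : ∀ i, v i / u i + u i / v i - 2 = (u i - v i) ^ 2 / (u i * v i) := by
    intro i; have := hu i; have := hv i; field_simp; ring
  have h3 : ∑ i, (u i - v i) ^ 2 / (u i * v i) ≤ 0 := by
    simp only [← e]
    rw [Finset.sum_sub_distrib, Finset.sum_add_distrib]
    simp; linarith
  have hnn : ∀ i ∈ Finset.univ, 0 ≤ (u i - v i) ^ 2 / (u i * v i) := fun i _ => by
    have := hu i; have := hv i; positivity
  have h4 := (Finset.sum_eq_zero_iff_of_nonneg hnn).1
    (le_antisymm h3 (Finset.sum_nonneg hnn)) i (Finset.mem_univ i)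
  have h5 : (u i * v i) ≠ 0 := (mul_pos (hu i) (hv i)).ne'
  rw [div_eq_zero_iff, or_iff_left h5] at h4
  have := pow_eq_zero_iff (two_ne_zero) |>.1 h4
  exact sub_eq_zero.1 this

/-- contact set -/
def CS {n : ℕ} (X y : Fin n → ℝ) : Set ℝ := {σ | 0 < σ ∧ DD X y σ = n}

lemma DD_le {n : ℕ} (X : Fin n → ℝ) (hX : ∀ i, X i ≠ 0) {G : Measure ℝ} (hG : IsNPMLE X G)
    {s : ℝ} (hs : 0 < s) : DD X (fun i => mixDensity 0 G (X i)) s ≤ n := by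
  have := npmle_foc X hX hG (dirac_null measurableSet_Ioi (show s ∈ Set.Ioi 0 from hs))
  simp only [mix_dirac] at this
  exact this

lemma CS_ae {n : ℕ} (X : Fin n → ℝ) (hX : ∀ i, X i ≠ 0) {G : Measure ℝ} (hG : IsNPMLE X G) :
    ∀ᵐ s ∂G, s ∈ CS X (fun i => mixDensity 0 G (X i)) := by
  have := hG.1
  set y := fun i => mixDensity 0 G (X i) with hy
  have hae : ∀ᵐ σ ∂G, σ ∈ Set.Ioi (0:ℝ) := hG.2.1
  have h1 : ∫ s, ((n:ℝ) - DD X y s) ∂G = 0 := by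
    rw [integral_sub (integrable_const _) (DD_int X y hX G hG.2.1), DD_integral X y hX G hG.2.1]
    have : ∀ i, mixDensity 0 G (X i) / y i = 1 := fun i =>
      div_self (mix_pos _ (hX i) G hG.2.1).ne'
    simp [this]
  rw [integral_eq_zero_iff_of_nonneg_ae] at h1
  · filter_upwards [h1, hae] with s h hs
    exact ⟨hs, (sub_eq_zero.1 h).symm⟩
  · filter_upwards [hae] with s hs
    have := DD_le X hX hG hs
    simpa using this
  · exact (integrable_const _).sub (DD_int X y hX G hG.2.1)

lemma CS_card {n : ℕ} (hn : 0 < n) (X y : Fin n → ℝ) (hle : ∀ s, 0 < s → DD X y s ≤ n)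
    (Z : Finset ℝ) (hZ : ↑Z ⊆ CS X y) :
    Z.card ≤ (Finset.univ.image fun i => X i ^ 2 / 2).card := by
  have hne : Nonempty (Fin n) := ⟨⟨0, hn⟩⟩
  set S := Finset.univ.image fun i => X i ^ 2 / 2 with hS
  let c : ℝ → ℝ := fun a => ∑ i with X i ^ 2 / 2 = a, (y i)⁻¹
  set N : ℝ := - (n * √(2 * Real.pi)) with hN
  have hpi : 0 < √(2 * Real.pi) := by positivity
  have hn' : (0:ℝ) < n := by exact_mod_cast hn
  have key : ∀ s, 0 < s → hh S c (Polynomial.C N) (s ^ 2)⁻¹ =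
      (√(2 * Real.pi) * (√((s ^ 2)⁻¹))⁻¹) * (DD X y s - n) := by
    intro s hs
    have h1 : ∑ a ∈ S, c a * Real.exp (-a * (s ^ 2)⁻¹) =
        ∑ i, (y i)⁻¹ * Real.exp (-(X i ^ 2 / 2) * (s ^ 2)⁻¹) := by
      rw [← Finset.sum_fiberwise_of_maps_to (t := S) (g := fun i => X i ^ 2 / 2)
        (fun i hi => Finset.mem_image_of_mem _ hi)]
      refine Finset.sum_congr rfl fun a _ => ?_
      simp only [c]
      rw [Finset.sum_mul]
      refine Finset.sum_congr rfl fun i hi => ?_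
      rw [(Finset.mem_filter.1 hi).2]
    have hq : 0 < √((s ^ 2)⁻¹) := by positivity
    unfold hh DD
    rw [h1, mul_sub, Finset.mul_sum, Polynomial.eval_C]
    have : ∀ i, √(2 * Real.pi) * (√(s ^ 2)⁻¹)⁻¹ * (kk (X i) s / y i) =
        (y i)⁻¹ * Real.exp (-(X i ^ 2 / 2) * (s ^ 2)⁻¹) := by
      intro i
      rw [kk_eq _ hs, div_eq_mul_inv]
      generalize (y i)⁻¹ = z
      field_simp
    simp only [this, hN]
    ring
  have hinj : Set.InjOn (fun s : ℝ => (s ^ 2)⁻¹) (Z : Set ℝ) := by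
    intro s hs t ht h
    exact (pow_left_inj₀ (hZ hs).1.le (hZ ht).1.le two_ne_zero).1 (inv_injective h)
  rw [← Finset.card_image_of_injOn hinj]
  refine max_count S (Finset.univ_nonempty.image _) c N (by rw [hN]; exact (neg_neg_of_pos (by positivity)).ne) ?_ _ ?_
  · intro x hx
    have hx' : x = ((√x⁻¹) ^ 2)⁻¹ := by rw [Real.sq_sqrt (by positivity), inv_inv]
    have hs : 0 < √x⁻¹ := by positivity
    rw [hx', key _ hs]
    refine mul_nonpos_of_nonneg_of_nonpos (by positivity) ?_
    linarith [hle _ hs]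
  · intro z hz
    obtain ⟨s, hs, rfl⟩ := Finset.mem_image.1 hz
    obtain ⟨h0, h1⟩ := hZ hs
    refine ⟨by simp; positivity, ?_⟩
    rw [key s h0, h1]; simp

lemma finset_of_bound {A : Set ℝ} {M : ℕ} (h : ∀ Z : Finset ℝ, ↑Z ⊆ A → Z.card ≤ M) :
    ∃ S : Finset ℝ, (S : Set ℝ) = A ∧ S.card ≤ M := by
  have hf : A.Finite := by
    by_contra hc
    obtain ⟨t, ht, hc⟩ := Set.Infinite.exists_subset_card_eq hc (M + 1)
    have := h t ht
    omega
  exact ⟨hf.toFinset, by simp, h _ (by simp)⟩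

lemma mix_finset (x : ℝ) (hx : x ≠ 0) {G : Measure ℝ} [IsProbabilityMeasure G]
    (hG0 : G (Set.Ioi 0)ᶜ = 0) {S : Finset ℝ} (hS : ∀ᵐ s ∂G, s ∈ (S : Set ℝ)) :
    mixDensity 0 G x = ∑ s ∈ S, G.real {s} * kk x s := by
  rw [mix_eq]
  conv_lhs => rw [← Measure.restrict_eq_self_of_ae_mem hS]
  rw [setIntegral_finset _ (kk_int x hx G hG0).integrableOn]
  rfl

lemma meas_eq {G H : Measure ℝ} [IsProbabilityMeasure G] [IsProbabilityMeasure H] {S : Finset ℝ}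
    (hG : ∀ᵐ s ∂G, s ∈ (S : Set ℝ)) (hH : ∀ᵐ s ∂H, s ∈ (S : Set ℝ))
    (h : ∀ s ∈ S, G.real {s} = H.real {s}) : G = H := by
  classical
  ext A hA
  have key : ∀ K : Measure ℝ, (∀ᵐ s ∂K, s ∈ (S : Set ℝ)) →
      K A = ∑ s ∈ S with s ∈ A, K {s} := by
    intro K hK
    rw [sum_measure_singleton]
    refine measure_congr ?_
    filter_upwards [hK] with s hs
    apply propext
    change s ∈ A ↔ s ∈ ((S.filter (· ∈ A) : Finset ℝ) : Set ℝ)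
    have : s ∈ S := hs
    simp [this]
  rw [key G hG, key H hH]
  refine Finset.sum_congr rfl fun s hs => ?_
  have := h s (Finset.mem_filter.1 hs).1
  rwa [measureReal_def, measureReal_def, ENNReal.toReal_eq_toReal_iff' (by finiteness) (by finiteness)] at this

lemma npmle_unique {n : ℕ} (hn : 0 < n) (X : Fin n → ℝ) (hX : ∀ i, X i ≠ 0) {G H : Measure ℝ}
    (hG : IsNPMLE X G) (hH : IsNPMLE X H) : G = H := by
  have := hG.1
  have := hH.1
  have hyy : (fun i => mixDensity 0 G (X i)) = (fun i => mixDensity 0 H (X i)) :=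
    funext fun i => npmle_y X hX hG hH i
  obtain ⟨S, hS, hcard⟩ := finset_of_bound (CS_card hn X _ (fun s hs => DD_le X hX hG hs))
  have hGS := CS_ae X hX hG
  have hHS := CS_ae X hX hH
  rw [← hyy] at hHS
  rw [← hS] at hGS hHS
  refine meas_eq hGS hHS ?_
  have hpos : ∀ s ∈ S, 0 < s := by
    intro s hs
    have : s ∈ (S : Set ℝ) := hs
    rw [hS] at this
    exact this.1
  let τ : ℝ → ℝ := fun s => (s ^ 2)⁻¹
  have hinj : Set.InjOn τ (S : Set ℝ) := by
    intro s hs t ht h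
    exact (pow_left_inj₀ (hpos s hs).le (hpos t ht).le two_ne_zero).1 (inv_injective h)
  let q : ℝ → ℝ := fun r => (G.real {√(r⁻¹)} - H.real {√(r⁻¹)}) * √r
  have hback : ∀ s ∈ S, √((τ s)⁻¹) = s := by
    intro s hs
    simp only [τ, inv_inv]
    exact Real.sqrt_sq (hpos s hs).le
  have hz := expsum_zero (S.image τ) q (Finset.univ.image fun i => X i ^ 2 / 2)
    (by rwa [Finset.card_image_of_injOn hinj]) (by
      intro z hz
      obtain ⟨i, -, rfl⟩ := Finset.mem_image.1 hz
      rw [Finset.sum_image hinj]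
      have h1 := npmle_y X hX hG hH i
      rw [mix_finset _ (hX i) hG.2.1 hGS, mix_finset _ (hX i) hH.2.1 hHS, ← sub_eq_zero,
        ← Finset.sum_sub_distrib] at h1
      have hpi : 0 < √(2 * Real.pi) := by positivity
      have h2 : ∑ s ∈ S, q (τ s) * Real.exp (-τ s * (X i ^ 2 / 2)) = √(2 * Real.pi) *
          ∑ s ∈ S, (G.real {s} * kk (X i) s - H.real {s} * kk (X i) s) := by
        rw [Finset.mul_sum]
        refine Finset.sum_congr rfl fun s hs => ?_
        simp only [q]
        rw [hback s hs, kk_eq _ (hpos s hs)]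
        have : -τ s * (X i ^ 2 / 2) = -(X i ^ 2 / 2) * (s ^ 2)⁻¹ := by simp only [τ]; ring
        rw [this]
        simp only [τ]
        field_simp
      rw [h2, h1, mul_zero])
  intro s hs
  have := hz (τ s) (Finset.mem_image_of_mem _ hs)
  simp only [q] at this
  rw [hback s hs] at this
  have hp := hpos s hs
  have hq : √(τ s) ≠ 0 := by simp only [τ]; positivity
  rcases mul_eq_zero.1 this with h | h
  · linarith
  · exact absurd h hq


/-- Lemma 11 / `lemma: structural`. If all data points are nonzero,
the NPMLE exists, is unique, is a discrete measure with at most `|{|X₁|,…,|Xₙ|}|` atoms,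
and is supported in `[minᵢ |Xᵢ|, maxᵢ |Xᵢ|]`. -/
theorem stmt14 (n : ℕ) (hn : 0 < n) (X : Fin n → ℝ) (hX : ∀ i, X i ≠ 0) :
    (∃! G : Measure ℝ, IsNPMLE X G) ∧
      ∀ G : Measure ℝ, IsNPMLE X G →
        ∃ S : Finset ℝ,
          G (↑S)ᶜ = 0 ∧
          S.card ≤ (Finset.univ.image fun i => |X i|).card ∧
          ↑S ⊆ Set.Icc (sInf (Set.range fun i => |X i|)) (sSup (Set.range fun i => |X i|)) := by
  have hne : Nonempty (Fin n) := ⟨⟨0, hn⟩⟩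
  have hfin : (Set.range fun i => |X i|).Finite := Set.finite_range _
  have hnon : (Set.range fun i => |X i|).Nonempty := Set.range_nonempty _
  have hXa : ∀ i, sInf (Set.range fun i => |X i|) ≤ |X i| := fun i =>
    csInf_le hfin.bddBelow ⟨i, rfl⟩
  have hXb : ∀ i, |X i| ≤ sSup (Set.range fun i => |X i|) := fun i =>
    le_csSup hfin.bddAbove ⟨i, rfl⟩
  have ha : 0 < sInf (Set.range fun i => |X i|) := by
    obtain ⟨i, hi⟩ := hnon.csInf_mem hfin
    rw [← hi]; exact abs_pos.2 (hX i)
  have hab := (hXa ⟨0, hn⟩).trans (hXb ⟨0, hn⟩)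
  refine ⟨?_, ?_⟩
  · obtain ⟨G, hG⟩ := exists_npmle hn X hX ha hab hXa hXb
    exact ⟨G, hG, fun H hH => npmle_unique hn X hX hH hG⟩
  · intro G hG
    have := hG.1
    obtain ⟨S, hS, hcard⟩ := finset_of_bound (CS_card hn X _ (fun s hs => DD_le X hX hG hs))
    refine ⟨S, ?_, hcard.trans ?_, ?_⟩
    · rw [hS]; exact CS_ae X hX hG
    · have : (Finset.univ.image fun i => X i ^ 2 / 2) =
          (Finset.univ.image fun i => |X i|).image (fun a => a ^ 2 / 2) := by
        rw [Finset.image_image]; congr 1; ext i; simp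
      rw [this]
      exact Finset.card_image_le
    · rw [hS]
      intro s hs
      by_contra hc
      obtain ⟨s', hs', hlt⟩ := DD_proj hn X (fun i => mixDensity 0 G (X i))
        (fun i => mix_pos _ (hX i) G hG.2.1) ha hab hXa hXb hs.1 hc
      have := DD_le X hX hG (ha.trans_le hs'.1)
      rw [hs.2] at hlt
      linarith
end

section
/- Let 0 < σ_min ≤ 1 ≤ σ_max and let 𝒫₀ = { f_{0,G} : supp(G) ⊆ [σ_min, σ_max] } be the class of centered normal scale mixture densities. Then there is a universal constant C > 0 such that for every ε ∈ (0,1/2), the covering number of 𝒫₀ in the sup norm on ℝ satisfies log N(ε, 𝒫₀, L_∞(ℝ)) ≤ C · log³( 1/(ε σ_min) ) · log⁴ log( 1/(ε σ_min) ). In particular, the bound does not depend on σ_max. -/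
open MeasureTheory ProbabilityTheory
open scoped ENNReal NNReal

lemma aux_cover_s15 {ι : Type} [Fintype ι] [Nonempty ι] (σmin σmax ε M : ℝ) (hε : 0 < ε) (R : ℕ)
    (c : ι → ℝ → ℝ) (b : ι → ℝ → ℝ) (hc : ∀ i, Measurable (c i))
    (hcM : ∀ i, ∀ s, σmin ≤ s → |c i s| ≤ M) (hb : ∀ i x, |b i x| ≤ 1)
    (hk : ∀ x, Measurable (fun s : ℝ => (1 / s) * stdNormalPDF ((x - 0) / s)))
    (hR : M * (2 * Fintype.card ι) / ε ≤ R)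
    (happ : ∀ s x, σmin ≤ s →
      |(1 / s) * stdNormalPDF ((x - 0) / s) - ∑ i, c i s * b i x| ≤ ε / 2) :
    coveringNum ε (mixClass0 σmin σmax) Set.univ ≤ ((2 * R + 1 : ℕ) : ℝ≥0∞) ^ (Fintype.card ι) := by
  classical
  have hN : (0 : ℝ) < Fintype.card ι := by exact_mod_cast Fintype.card_pos
  set N : ℝ := (Fintype.card ι : ℝ) with hNdef
  set η : ℝ := ε / (2 * N) with hη
  have hηpos : 0 < η := by positivity
  let P : Finset (ι → ℤ) := Fintype.piFinset (fun _ => Finset.Icc (-(R : ℤ)) R)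
  let F : (ι → ℤ) → (ℝ → ℝ) := fun n x => ∑ i, (n i : ℝ) * η * b i x
  have hPcard : P.card = (2 * R + 1) ^ (Fintype.card ι) := by
    simp only [P, Fintype.card_piFinset, Int.card_Icc, Finset.prod_const, Finset.card_univ]
    congr 1
    omega
  have h1 : coveringNum ε (mixClass0 σmin σmax) Set.univ ≤ ((P.image F).card : ℝ≥0∞) := by
    apply sInf_le
    refine ⟨P.image F, rfl, ?_⟩
    rintro f ⟨G, ⟨hG, hGs⟩, rfl⟩
    have hae : ∀ᵐ s ∂G, σmin ≤ s := by
      have : ∀ᵐ s ∂G, s ∈ Set.Icc σmin σmax := by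
        rw [ae_iff]; exact hGs
      filter_upwards [this] with s hs using hs.1
    have hint : ∀ i, Integrable (c i) G := fun i =>
      Integrable.of_bound (hc i).aestronglyMeasurable M (by
        filter_upwards [hae] with s hs
        simpa using hcM i s hs)
    let m : ι → ℝ := fun i => ∫ s, c i s ∂G
    have hm : ∀ i, |m i| ≤ M := fun i => by
      have := norm_integral_le_of_norm_le_const (μ := G) (f := c i) (C := M) (by
        filter_upwards [hae] with s hs
        simpa using hcM i s hs)
      simpa using this
    let n : ι → ℤ := fun i => if 0 ≤ m i then ⌊m i / η⌋ else ⌈m i / η⌉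
    have hnη : ∀ i, |m i - n i * η| ≤ η := by
      intro i
      have h2 : m i = (m i / η) * η := by field_simp
      have h3 : |m i / η - n i| ≤ 1 := by
        simp only [n]
        split_ifs
        · rw [abs_le]
          constructor <;> linarith [Int.floor_le (m i / η), Int.lt_floor_add_one (m i / η)]
        · rw [abs_le]
          constructor <;> linarith [Int.le_ceil (m i / η), Int.ceil_lt_add_one (m i / η)]
      calc |m i - n i * η| = |(m i / η - n i) * η| := by rw [sub_mul, ← h2]
        _ = |m i / η - n i| * η := by rw [abs_mul, abs_of_pos hηpos]
        _ ≤ 1 * η := by gcongr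
        _ = η := one_mul _
    have hnR : n ∈ P := by
      simp only [P, Fintype.mem_piFinset, Finset.mem_Icc]
      intro i
      have h4 : |m i / η| ≤ R := by
        rw [abs_div, abs_of_pos hηpos]
        calc |m i| / η ≤ M / η := by gcongr; exact hm i
          _ = M * (2 * N) / ε := by rw [hη]; field_simp
          _ ≤ R := hR
      rw [abs_le] at h4
      simp only [n]
      split_ifs with h0
      · constructor
        · have : 0 ≤ ⌊m i / η⌋ := Int.floor_nonneg.mpr (by positivity)
          omega
        · have := (Int.floor_le (m i / η)).trans h4.2
          exact_mod_cast this
      · constructor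
        · have := h4.1.trans (Int.le_ceil (m i / η))
          exact_mod_cast this
        · have : ⌈m i / η⌉ ≤ 0 := Int.ceil_le.mpr (by
            push_cast
            exact div_nonpos_of_nonpos_of_nonneg (le_of_not_ge h0) hηpos.le)
          omega
    refine ⟨F n, Finset.mem_image_of_mem _ hnR, fun x _ => ?_⟩
    have hsumint : Integrable (fun s => ∑ i, c i s * b i x) G :=
      integrable_finsetSum _ (fun i _ => (hint i).mul_const _)
    have hdiff : Integrable (fun s => (1 / s) * stdNormalPDF ((x - 0) / s) - ∑ i, c i s * b i x) G :=
      Integrable.of_bound ((hk x).aestronglyMeasurable.sub hsumint.aestronglyMeasurable) (ε / 2) (by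
        filter_upwards [hae] with s hs
        simpa using happ s x hs)
    have hkint : Integrable (fun s => (1 / s) * stdNormalPDF ((x - 0) / s)) G := by
      refine (hdiff.add hsumint).congr (Filter.Eventually.of_forall fun s => ?_)
      simp
    have hA : |mixDensity 0 G x - ∑ i, m i * b i x| ≤ ε / 2 := by
      have e1 : ∑ i, m i * b i x = ∫ s, ∑ i, c i s * b i x ∂G := by
        rw [integral_finsetSum _ (fun i _ => (hint i).mul_const _)]
        simp only [m, integral_mul_const]
      rw [e1, mixDensity, ← integral_sub hkint hsumint]
      have := norm_integral_le_of_norm_le_const (μ := G) (C := ε / 2)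
        (f := fun s => (1 / s) * stdNormalPDF ((x - 0) / s) - ∑ i, c i s * b i x) (by
        filter_upwards [hae] with s hs
        simpa using happ s x hs)
      simpa using this
    have hB : |∑ i, m i * b i x - F n x| ≤ ε / 2 := by
      simp only [F]
      rw [← Finset.sum_sub_distrib]
      calc |∑ i, (m i * b i x - n i * η * b i x)| ≤ ∑ i, |m i * b i x - n i * η * b i x| :=
            Finset.abs_sum_le_sum_abs _ _
        _ ≤ ∑ _i : ι, η := by
            gcongr with i
            rw [← sub_mul, abs_mul]
            calc |m i - n i * η| * |b i x| ≤ η * 1 := by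
                  gcongr
                  · exact hnη i
                  · exact hb i x
              _ = η := mul_one _
        _ = ε / 2 := by
            rw [Finset.sum_const, nsmul_eq_mul, Finset.card_univ, ← hNdef, hη]
            field_simp
    calc |mixDensity 0 G x - F n x| = |(mixDensity 0 G x - ∑ i, m i * b i x) + (∑ i, m i * b i x - F n x)| := by
          congr 1; ring
      _ ≤ _ := abs_add_le _ _
      _ ≤ ε := by linarith
  refine h1.trans ?_
  have : (P.image F).card ≤ (2 * R + 1) ^ (Fintype.card ι) := hPcard ▸ Finset.card_image_le
  exact_mod_cast this

/-- truncated exponential bound -/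
lemma aux_exp (z w : ℝ) (hz : 0 ≤ z) (hw : 0 ≤ w) (hw2 : w ≤ 1 / 2) (K : ℕ) :
    |Real.exp (-(z * (1 + w))) -
      ∑ k ∈ Finset.range K, (-w) ^ k * (Real.exp (-z) * z ^ k / k.factorial)| ≤ (1 / 2) ^ K := by
  have h1 : HasSum (fun k : ℕ => (-w) ^ k * (Real.exp (-z) * z ^ k / k.factorial))
      (Real.exp (-(z * (1 + w)))) := by
    have := (NormedSpace.expSeries_div_hasSum_exp (-(z * w))).mul_left (Real.exp (-z))
    rw [← Real.exp_eq_exp_ℝ, ← Real.exp_add] at this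
    have e1 : (fun k : ℕ => (-w) ^ k * (Real.exp (-z) * z ^ k / k.factorial)) =
        fun i : ℕ => Real.exp (-z) * ((-(z * w)) ^ i / (i.factorial : ℝ)) := by
      funext k; rw [show -(z * w) = (-w) * z by ring, mul_pow]; ring
    rw [e1, show -(z * (1 + w)) = -z + -(z * w) by ring]
    exact this
  have h2 : HasSum (fun k : ℕ => (1 / 2 : ℝ) ^ K * (Real.exp (-z) * z ^ k / k.factorial))
      ((1 / 2) ^ K) := by
    have := (NormedSpace.expSeries_div_hasSum_exp z).mul_left ((1 / 2) ^ K * Real.exp (-z))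
    rw [← Real.exp_eq_exp_ℝ, mul_assoc, ← Real.exp_add] at this
    rw [neg_add_cancel, Real.exp_zero, mul_one] at this
    have e1 : (fun k : ℕ => (1 / 2 : ℝ) ^ K * (Real.exp (-z) * z ^ k / k.factorial)) =
        fun i : ℕ => (1 / 2 : ℝ) ^ K * Real.exp (-z) * (z ^ i / (i.factorial : ℝ)) := by
      funext k; ring
    rw [e1]
    exact this
  have h3 := (hasSum_nat_add_iff' K).mpr h1
  rw [← h3.tsum_eq]
  have h4 : Summable (fun k : ℕ => (1 / 2 : ℝ) ^ K * (Real.exp (-z) * z ^ (k + K) / (k + K).factorial)) :=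
    ((summable_nat_add_iff K).mpr h2.summable)
  have h5 : ∑' k : ℕ, (1 / 2 : ℝ) ^ K * (Real.exp (-z) * z ^ (k + K) / (k + K).factorial) ≤ (1 / 2) ^ K := by
    have e2 := h2.summable.sum_add_tsum_nat_add K
    rw [h2.tsum_eq] at e2
    have : 0 ≤ ∑ i ∈ Finset.range K, (1 / 2 : ℝ) ^ K * (Real.exp (-z) * z ^ i / i.factorial) :=
      Finset.sum_nonneg fun i _ => by positivity
    linarith
  refine le_trans ?_ h5
  rw [← Real.norm_eq_abs]
  refine tsum_of_norm_bounded h4.hasSum fun k => ?_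
  rw [norm_mul, norm_pow, norm_neg, Real.norm_of_nonneg hw,
    Real.norm_of_nonneg (by positivity : 0 ≤ Real.exp (-z) * z ^ (k + K) / (k + K).factorial)]
  gcongr
  calc w ^ (k + K) ≤ (1 / 2) ^ (k + K) := by gcongr
    _ ≤ (1 / 2) ^ K := pow_le_pow_of_le_one (by norm_num) (by norm_num) (by omega)

lemma aux_feat (z : ℝ) (hz : 0 ≤ z) (k : ℕ) : |Real.exp (-z) * z ^ k / k.factorial| ≤ 1 := by
  rw [abs_of_nonneg (by positivity)]
  have := Real.pow_div_factorial_le_exp z hz k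
  calc Real.exp (-z) * z ^ k / k.factorial = Real.exp (-z) * (z ^ k / k.factorial) := by ring
    _ ≤ Real.exp (-z) * Real.exp z := by gcongr
    _ = 1 := by rw [← Real.exp_add]; simp

lemma aux_v : 1 / Real.sqrt (2 * Real.pi) ≤ 2 / 5 := by
  have : (5 / 2 : ℝ) ≤ Real.sqrt (2 * Real.pi) := by
    apply Real.le_sqrt_of_sq_le
    nlinarith [Real.pi_gt_d2]
  rw [div_le_div_iff₀ (by linarith) (by norm_num)]
  linarith

lemma aux_kernel (s x : ℝ) : (1 / s) * stdNormalPDF ((x - 0) / s) =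
    (1 / Real.sqrt (2 * Real.pi)) * (1 / s) * Real.exp (-(x ^ 2 * (1 / s ^ 2) / 2)) := by
  unfold stdNormalPDF
  rw [show -((x - 0) / s) ^ 2 / 2 = -(x ^ 2 * (1 / s ^ 2) / 2) by ring]
  ring

lemma aux_kmeas (x : ℝ) : Measurable (fun s : ℝ => (1 / s) * stdNormalPDF ((x - 0) / s)) := by
  unfold stdNormalPDF
  fun_prop

lemma aux_kernel_bd (a s x : ℝ) (ha : 0 < a) (hs : a ≤ s) :
    0 ≤ (1 / s) * stdNormalPDF ((x - 0) / s) ∧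
    (1 / s) * stdNormalPDF ((x - 0) / s) ≤ 2 / 5 * (1 / a) := by
  have hs0 : 0 < s := ha.trans_le hs
  rw [aux_kernel]
  refine ⟨by positivity, ?_⟩
  have h1 : Real.exp (-(x ^ 2 * (1 / s ^ 2) / 2)) ≤ 1 := by
    apply Real.exp_le_one_iff.mpr
    have : 0 ≤ x ^ 2 * (1 / s ^ 2) / 2 := by positivity
    linarith
  calc (1 / Real.sqrt (2 * Real.pi)) * (1 / s) * Real.exp (-(x ^ 2 * (1 / s ^ 2) / 2))
      ≤ 2 / 5 * (1 / a) * 1 := by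
        have := aux_v
        generalize 1 / Real.sqrt (2 * Real.pi) = v at this
        gcongr
    _ = _ := mul_one _

lemma aux_small_s15 (σmin σmax ε : ℝ) (h0 : 0 < σmin) (h5 : 1 / 5 ≤ ε * σmin) :
    coveringNum ε (mixClass0 σmin σmax) Set.univ ≤ 1 := by
  apply sInf_le
  refine ⟨{fun _ => 1 / 5 * (1 / σmin)}, by simp, ?_⟩
  rintro f ⟨G, ⟨hG, hGs⟩, rfl⟩
  refine ⟨_, Finset.mem_singleton_self _, fun x _ => ?_⟩
  have hae : ∀ᵐ s ∂G, σmin ≤ s := by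
    have : ∀ᵐ s ∂G, s ∈ Set.Icc σmin σmax := by
      rw [ae_iff]; exact hGs
    filter_upwards [this] with s hs using hs.1
  have hp : 0 ≤ mixDensity 0 G x := by
    apply integral_nonneg_of_ae
    filter_upwards [hae] with s hs using (aux_kernel_bd σmin s x h0 hs).1
  have hq : mixDensity 0 G x ≤ 2 / 5 * (1 / σmin) := by
    have := norm_integral_le_of_norm_le_const (μ := G) (C := 2 / 5 * (1 / σmin))
        (f := fun s => (1 / s) * stdNormalPDF ((x - 0) / s)) (by
        filter_upwards [hae] with s hs
        rw [Real.norm_of_nonneg (aux_kernel_bd σmin s x h0 hs).1]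
        exact (aux_kernel_bd σmin s x h0 hs).2)
    rw [probReal_univ, mul_one] at this
    exact (le_abs_self _).trans this
  have h6 : 1 / 5 * (1 / σmin) ≤ ε := by
    rw [mul_one_div, div_le_iff₀ h0]; exact h5
  rw [abs_le]
  constructor <;> linarith

lemma aux_main_s15 (σmin σmax ε : ℝ) (h0 : 0 < σmin) (hε : 0 < ε) (n : ℕ) (hn : 1 ≤ n)
    (hX : 1 / (ε * σmin) ≤ Real.exp n) :
    coveringNum ε (mixClass0 σmin σmax) Set.univ ≤ ENNReal.ofReal (Real.exp (70 * (n : ℝ) ^ 3)) := by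
  classical
  set X := 1 / (ε * σmin) with hXdef
  have hXpos : 0 < X := by positivity
  have hXσ : 1 / σmin = X * ε := by rw [hXdef]; field_simp
  set v := 1 / Real.sqrt (2 * Real.pi) with hv
  have hvpos : 0 < v := by positivity
  have hv2 : v ≤ 2 / 5 := aux_v
  let t : ℕ → ℝ := fun j => ε ^ 2 * (3 / 2) ^ j
  have htpos : ∀ j, 0 < t j := fun j => by positivity
  have htsucc : ∀ j, t (j + 1) = 3 / 2 * t j := fun j => by simp only [t, pow_succ]; ring
  have htmono : StrictMono t := strictMono_nat_of_lt_succ fun j => by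
    rw [htsucc]; linarith [htpos j]
  let ι := Fin (5 * n) × Fin (2 * n)
  have : Nonempty ι := ⟨(⟨0, by omega⟩, ⟨0, by omega⟩)⟩
  have hcard : Fintype.card ι = 10 * n ^ 2 := by
    simp only [ι, Fintype.card_prod, Fintype.card_fin]; ring
  let S : ℕ → Set ℝ := fun j => {s | t j ≤ 1 / s ^ 2 ∧ 1 / s ^ 2 < t (j + 1)}
  have hS : ∀ j, MeasurableSet (S j) := fun j => by
    refine MeasurableSet.inter ?_ ?_
    · exact measurableSet_le measurable_const (by fun_prop : Measurable fun s : ℝ => 1 / s ^ 2)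
    · exact measurableSet_lt (by fun_prop : Measurable fun s : ℝ => 1 / s ^ 2) measurable_const
  let c : ι → ℝ → ℝ := fun i =>
    (S i.1).indicator (fun s => v * (1 / s) * (-(1 / s ^ 2 / t i.1 - 1)) ^ (i.2 : ℕ))
  let b : ι → ℝ → ℝ := fun i x =>
    Real.exp (-(x ^ 2 * t i.1 / 2)) * (x ^ 2 * t i.1 / 2) ^ (i.2 : ℕ) / (i.2 : ℕ).factorial
  have hw : ∀ j s, s ∈ S j → 0 ≤ 1 / s ^ 2 / t j - 1 ∧ 1 / s ^ 2 / t j - 1 ≤ 1 / 2 := by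
    intro j s hs
    obtain ⟨h1, h2⟩ := hs
    rw [htsucc] at h2
    have h3 : 1 ≤ 1 / s ^ 2 / t j := (one_le_div (htpos j)).mpr h1
    have h4 : 1 / s ^ 2 / t j ≤ 3 / 2 := (div_le_iff₀ (htpos j)).mpr h2.le
    constructor <;> linarith
  have he1 : (2.7 : ℝ) < Real.exp 1 := by linarith [Real.exp_one_gt_d9]
  have he2 : Real.exp 1 < 2.7183 := by linarith [Real.exp_one_lt_d9]
  have hen : Real.exp n = Real.exp 1 ^ n := by rw [← Real.exp_nat_mul, mul_one]
  have hnpos : (1 : ℝ) ≤ n := by exact_mod_cast hn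
  have hcov : ∀ R : ℕ, (2 / 5 * (1 / σmin)) * (2 * Fintype.card ι) / ε ≤ R →
      coveringNum ε (mixClass0 σmin σmax) Set.univ ≤ ((2 * R + 1 : ℕ) : ℝ≥0∞) ^ (Fintype.card ι) := by
    intro R hR
    refine aux_cover_s15 σmin σmax ε (2 / 5 * (1 / σmin)) hε R c b ?_ ?_ ?_ aux_kmeas hR ?_
    · intro i
      exact Measurable.indicator (by fun_prop) (hS _)
    · intro i s hs
      have hs0 : 0 < s := h0.trans_le hs
      simp only [c, Set.indicator]
      split_ifs with hmem
      · obtain ⟨hw1, hw2⟩ := hw _ s hmem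
        rw [abs_mul, abs_pow, abs_neg, abs_of_nonneg hw1, abs_of_pos (by positivity)]
        calc v * (1 / s) * (1 / s ^ 2 / t i.1 - 1) ^ (i.2 : ℕ) ≤ 2 / 5 * (1 / σmin) * 1 := by
              gcongr
              exact pow_le_one₀ hw1 (by linarith)
          _ = _ := mul_one _
      · rw [abs_zero]; positivity
    · intro i x
      exact aux_feat _ (by have := htpos i.1; positivity) _
    · intro s x hs
      have hs0 : 0 < s := h0.trans_le hs
      have hss : 1 / s ≤ 1 / σmin := by gcongr
      have hT : 1 / s ^ 2 < t (5 * n) := by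
        have e1 : 1 / s ^ 2 = (1 / s) ^ 2 := by ring
        have e2 : (1 / s) ^ 2 ≤ (X * ε) ^ 2 := by rw [← hXσ]; gcongr
        have e3 : X ^ 2 ≤ (Real.exp 1 ^ 2) ^ n := by
          rw [← pow_mul, mul_comm 2 n, pow_mul, ← hen]; gcongr
        have e4 : (Real.exp 1 ^ 2) ^ n < ((3 / 2 : ℝ) ^ 5) ^ n := by
          apply pow_lt_pow_left₀ _ (by positivity) (by omega)
          nlinarith
        simp only [t]
        rw [e1, pow_mul]
        calc (1 / s) ^ 2 ≤ (X * ε) ^ 2 := e2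
          _ = ε ^ 2 * X ^ 2 := by ring
          _ < _ := by
            apply mul_lt_mul_of_pos_left (e3.trans_lt e4) (by positivity)
      by_cases hcase : 1 / s ^ 2 < t 0
      · have hz : ∑ i, c i s * b i x = 0 := by
          apply Finset.sum_eq_zero
          intro i _
          have : s ∉ S i.1 := fun h => by
            have := htmono.monotone (Nat.zero_le (i.1 : ℕ))
            linarith [h.1]
          simp only [c, Set.indicator_of_notMem this, zero_mul]
        rw [hz, sub_zero]
        have hlt : 1 / ε ≤ s := by
          have : 1 / s ^ 2 < ε ^ 2 := by simpa [t] using hcase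
          have h7 : 1 / s < ε := by
            apply lt_of_pow_lt_pow_left₀ 2 hε.le
            rw [div_pow, one_pow]; exact this
          rw [div_le_iff₀ hε]
          rw [div_lt_iff₀ hs0] at h7
          linarith
        have := aux_kernel_bd (1 / ε) s x (by positivity) hlt
        rw [one_div_one_div] at this
        rw [abs_of_nonneg this.1]
        linarith [this.2]
      · push Not at hcase
        obtain ⟨j, hj, hjS⟩ : ∃ j, j < 5 * n ∧ s ∈ S j := by
          let p : ℕ → Prop := fun j => 1 / s ^ 2 < t j
          have hp : ∃ j, p j := ⟨_, hT⟩
          have hf := Nat.find_spec hp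
          have hne : Nat.find hp ≠ 0 := fun h => by
            rw [h] at hf; exact absurd hf (not_lt.mpr hcase)
          obtain ⟨m, hm⟩ := Nat.exists_eq_succ_of_ne_zero hne
          have hle : Nat.find hp ≤ 5 * n := Nat.find_min' hp hT
          refine ⟨m, by omega, ?_, ?_⟩
          · have := Nat.find_min hp (m := m) (by omega)
            exact not_lt.mp this
          · rw [hm] at hf; exact hf
        have hsum : ∑ i, c i s * b i x = v * (1 / s) * ∑ k ∈ Finset.range (2 * n),
            (-(1 / s ^ 2 / t j - 1)) ^ k *
              (Real.exp (-(x ^ 2 * t j / 2)) * (x ^ 2 * t j / 2) ^ k / k.factorial) := by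
          rw [Fintype.sum_prod_type, Finset.sum_eq_single (⟨j, hj⟩ : Fin (5 * n))]
          · rw [Finset.mul_sum, ← Fin.sum_univ_eq_sum_range (fun k => v * (1 / s) * ((-(1 / s ^ 2 / t j - 1)) ^ k *
              (Real.exp (-(x ^ 2 * t j / 2)) * (x ^ 2 * t j / 2) ^ k / k.factorial)))]
            refine Finset.sum_congr rfl fun k _ => ?_
            simp only [c, b, Set.indicator_of_mem hjS]
            ring
          · intro j' _ hne
            apply Finset.sum_eq_zero
            intro k _
            have : s ∉ S j' := fun h => hne (by
              apply Fin.ext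
              have a1 := htmono.lt_iff_lt.mp (h.1.trans_lt hjS.2)
              have a2 := htmono.lt_iff_lt.mp (hjS.1.trans_lt h.2)
              show (j' : ℕ) = j
              omega)
            simp only [c, Set.indicator_of_notMem this, zero_mul]
          · intro h; exact absurd (Finset.mem_univ _) h
        obtain ⟨hw1, hw2⟩ := hw _ s hjS
        have hE := aux_exp (x ^ 2 * t j / 2) (1 / s ^ 2 / t j - 1)
          (by have := htpos j; positivity) hw1 hw2 (2 * n)
        have hz : x ^ 2 * t j / 2 * (1 + (1 / s ^ 2 / t j - 1)) = x ^ 2 * (1 / s ^ 2) / 2 := by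
          have := (htpos j).ne'
          field_simp
          ring
        rw [hz] at hE
        rw [hsum, aux_kernel, ← mul_sub, abs_mul, abs_of_pos (by positivity)]
        have hK : (1 / 2 : ℝ) ^ (2 * n) * X ≤ 1 := by
          have : X ≤ 4 ^ n := hX.trans (by
            rw [hen]; gcongr; linarith)
          calc (1 / 2 : ℝ) ^ (2 * n) * X ≤ (1 / 2 : ℝ) ^ (2 * n) * 4 ^ n := by gcongr
            _ = 1 := by rw [pow_mul, ← mul_pow]; norm_num
        calc v * (1 / s) * _ ≤ 2 / 5 * (X * ε) * (1 / 2) ^ (2 * n) := by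
              rw [← hXσ]
              gcongr
          _ = 2 / 5 * ε * ((1 / 2) ^ (2 * n) * X) := by ring
          _ ≤ 2 / 5 * ε * 1 := by gcongr
          _ ≤ ε / 2 := by linarith
  -- numerics
  set R := ⌈8 * (n : ℝ) ^ 2 * X⌉₊ with hRdef
  have hRle := Nat.le_ceil (8 * (n : ℝ) ^ 2 * X)
  have hRlt := Nat.ceil_lt_add_one (by positivity : 0 ≤ 8 * (n : ℝ) ^ 2 * X)
  refine (hcov R ?_).trans ?_
  · rw [hcard, hXσ]
    push_cast
    refine le_trans (le_of_eq ?_) hRle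
    field_simp
    ring
  · rw [hcard]
    have hE1 : 1 ≤ Real.exp n := Real.one_le_exp (by positivity)
    have hnE : (n : ℝ) ≤ Real.exp n := by linarith [Real.add_one_le_exp (n : ℝ)]
    have h19 : (19 : ℝ) ≤ Real.exp n ^ 4 := by
      have : (2.7 : ℝ) ≤ Real.exp n := he1.le.trans (Real.exp_le_exp.mpr hnpos)
      calc (19 : ℝ) ≤ 2.7 ^ 4 := by norm_num
        _ ≤ _ := by gcongr
    have hbase : ((2 * R + 1 : ℕ) : ℝ) ≤ Real.exp n ^ 7 := by
      push_cast
      have h1 : 1 ≤ (n : ℝ) ^ 2 * Real.exp n := one_le_mul_of_one_le_of_one_le (one_le_pow₀ hnpos) hE1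
      have h2 : (n : ℝ) ^ 2 * X ≤ (n : ℝ) ^ 2 * Real.exp n := by gcongr
      calc 2 * (R : ℝ) + 1 ≤ 19 * ((n : ℝ) ^ 2 * Real.exp n) := by linarith
        _ ≤ Real.exp n ^ 4 * (Real.exp n ^ 2 * Real.exp n) := by gcongr
        _ = _ := by ring
    rw [← ENNReal.ofReal_natCast, ← ENNReal.ofReal_pow (by positivity)]
    apply ENNReal.ofReal_le_ofReal
    calc ((2 * R + 1 : ℕ) : ℝ) ^ (10 * n ^ 2) ≤ (Real.exp n ^ 7) ^ (10 * n ^ 2) := by gcongr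
      _ = Real.exp (70 * (n : ℝ) ^ 3) := by
        rw [← pow_mul, ← Real.exp_nat_mul]
        congr 1
        push_cast
        ring

/-- Lemma `lemma:step-I`. Sup-norm covering entropy bound for the class
of centered normal scale mixtures with `σmin ≤ 1 ≤ σmax`:
`log N(ε, 𝒫₀, L_∞(ℝ)) ≤ C log³(1/(ε σmin)) log⁴ log(1/(ε σmin))`, stated as a bound on
the covering number itself; in particular the bound does not depend on `σmax`. -/
theorem stmt15 :
    ∃ C : ℝ, 0 < C ∧
      ∀ σmin σmax ε : ℝ,
        0 < σmin → σmin ≤ 1 → 1 ≤ σmax →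
        ε ∈ Set.Ioo (0 : ℝ) (1 / 2) →
        coveringNum ε (mixClass0 σmin σmax) Set.univ ≤
          ENNReal.ofReal (Real.exp
            (C * (Real.log (1 / (ε * σmin))) ^ 3 *
              (Real.log (Real.log (1 / (ε * σmin)))) ^ 4)) := by
  refine ⟨40000, by norm_num, ?_⟩
  rintro σmin σmax ε h0 h1 - ⟨hε, hε2⟩
  have hpos : 0 < ε * σmin := by positivity
  have hlt : ε * σmin < 1 / 2 := by nlinarith
  set X := 1 / (ε * σmin) with hX
  have hX2 : 2 < X := by rw [hX, lt_div_iff₀ hpos]; linarith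
  set L := Real.log X with hL
  have hLpos : 0 < L := Real.log_pos (by linarith)
  by_cases h5 : 1 / 5 ≤ ε * σmin
  · refine (aux_small_s15 σmin σmax ε h0 h5).trans ?_
    rw [← ENNReal.ofReal_one]
    apply ENNReal.ofReal_le_ofReal
    apply Real.one_le_exp
    positivity
  · push Not at h5
    have hX5 : 5 < X := by rw [hX, lt_div_iff₀ hpos]; linarith
    have hL16 : 8 / 5 ≤ L := by
      rw [hL, Real.le_log_iff_exp_le (by linarith)]
      refine le_trans ?_ hX5.le
      have h : Real.exp (8 / 5) ^ 5 ≤ 5 ^ 5 := by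
        rw [← Real.exp_nat_mul]
        rw [show ((5 : ℕ) : ℝ) * (8 / 5) = ((8 : ℕ) : ℝ) * 1 by norm_num, Real.exp_nat_mul]
        calc Real.exp 1 ^ 8 ≤ 2.7183 ^ 8 := by
              gcongr
              linarith [Real.exp_one_lt_d9]
          _ ≤ 5 ^ 5 := by norm_num
      exact le_of_pow_le_pow_left₀ (by norm_num) (by norm_num) h
    have hLL : 3 / 8 ≤ Real.log L := by
      have := Real.one_sub_inv_le_log_of_pos hLpos
      have h2 : L⁻¹ ≤ (8 / 5 : ℝ)⁻¹ := by gcongr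
      norm_num at h2
      linarith
    have hn1 : 1 ≤ ⌈L⌉₊ := Nat.one_le_ceil_iff.mpr hLpos
    have hXe : X ≤ Real.exp (⌈L⌉₊ : ℝ) := by
      rw [← Real.log_le_iff_le_exp (by linarith)]
      exact Nat.le_ceil L
    refine (aux_main_s15 σmin σmax ε h0 hε ⌈L⌉₊ hn1 hXe).trans ?_
    apply ENNReal.ofReal_le_ofReal
    apply Real.exp_le_exp.mpr
    have hn2 : (⌈L⌉₊ : ℝ) ≤ 2 * L := by
      linarith [Nat.ceil_lt_add_one hLpos.le]
    have hLL4 : (3 / 8 : ℝ) ^ 4 ≤ Real.log L ^ 4 := by gcongr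
    calc 70 * (⌈L⌉₊ : ℝ) ^ 3 ≤ 70 * (2 * L) ^ 3 := by gcongr
      _ = 560 * L ^ 3 := by ring
      _ ≤ 40000 * L ^ 3 * (3 / 8) ^ 4 := by
        have : 0 ≤ L ^ 3 := by positivity
        nlinarith
      _ ≤ 40000 * L ^ 3 * Real.log L ^ 4 := by gcongr
end

section
/- Let P and Q be probability densities on a measurable space with respect to a common dominating measure. Then H²(P,Q) ≥ (1/2) ∫ (P−Q)²/(P+Q), and consequently for every measurable test function T with E_P[T²] + E_Q[T²] < ∞, H²(P,Q) ≥ (1/2) · ( E_P[T] − E_Q[T] )² / ( E_P[T²] + E_Q[T²] ). -/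
open MeasureTheory

/-- the variational lower bound `eq:Hellinger-variational`. For
probability densities `P, Q` w.r.t. a common dominating measure `ν`,
`H²(P,Q) ≥ (1/2)∫(P-Q)²/(P+Q) dν`, and consequently for every test function `T` with
`E_P[T²] + E_Q[T²] < ∞`,
`H²(P,Q) ≥ (1/2)(E_P[T] - E_Q[T])²/(E_P[T²] + E_Q[T²])`. -/
theorem stmt17 {α : Type*} [MeasurableSpace α] (ν : Measure α) (P Q : α → ℝ)
    (hPmeas : Measurable P) (hQmeas : Measurable Q)
    (hP0 : ∀ x, 0 ≤ P x) (hQ0 : ∀ x, 0 ≤ Q x)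
    (hPint : Integrable P ν) (hQint : Integrable Q ν)
    (hP1 : ∫ x, P x ∂ν = 1) (hQ1 : ∫ x, Q x ∂ν = 1) :
    (1 / 2) * ∫ x, (P x - Q x) ^ 2 / (P x + Q x) ∂ν ≤
        ∫ x, (Real.sqrt (P x) - Real.sqrt (Q x)) ^ 2 ∂ν ∧
      ∀ T : α → ℝ, Measurable T →
        Integrable (fun x => T x ^ 2 * P x) ν →
        Integrable (fun x => T x ^ 2 * Q x) ν →
        (1 / 2) * ((∫ x, T x * P x ∂ν) - ∫ x, T x * Q x ∂ν) ^ 2 /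
            ((∫ x, T x ^ 2 * P x ∂ν) + ∫ x, T x ^ 2 * Q x ∂ν) ≤
          ∫ x, (Real.sqrt (P x) - Real.sqrt (Q x)) ^ 2 ∂ν := by
  have hmJ : Measurable (fun x => (P x - Q x) ^ 2 / (P x + Q x)) := by fun_prop
  have hmH : Measurable (fun x => (Real.sqrt (P x) - Real.sqrt (Q x)) ^ 2) := by fun_prop
  have hJi : Integrable (fun x => (P x - Q x) ^ 2 / (P x + Q x)) ν := by
    refine (hPint.add hQint).mono' hmJ.aestronglyMeasurable (Filter.Eventually.of_forall fun x => ?_)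
    have h1 := hP0 x
    have h2 := hQ0 x
    rw [Real.norm_of_nonneg (by positivity)]
    refine div_le_of_le_mul₀ (by positivity) (by simp only [Pi.add_apply]; positivity) ?_
    simp only [Pi.add_apply]
    nlinarith [mul_nonneg h1 h2]
  have hHi : Integrable (fun x => (Real.sqrt (P x) - Real.sqrt (Q x)) ^ 2) ν := by
    refine (hPint.add hQint).mono' hmH.aestronglyMeasurable (Filter.Eventually.of_forall fun x => ?_)
    rw [Real.norm_of_nonneg (by positivity)]
    simp only [Pi.add_apply]
    nlinarith [Real.sq_sqrt (hP0 x), Real.sq_sqrt (hQ0 x),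
      mul_nonneg (Real.sqrt_nonneg (P x)) (Real.sqrt_nonneg (Q x))]
  have hfirst : (1 / 2) * ∫ x, (P x - Q x) ^ 2 / (P x + Q x) ∂ν ≤
      ∫ x, (Real.sqrt (P x) - Real.sqrt (Q x)) ^ 2 ∂ν := by
    rw [← integral_const_mul]
    refine integral_mono (hJi.const_mul _) hHi fun x => ?_
    have ha := Real.sq_sqrt (hP0 x)
    have hb := Real.sq_sqrt (hQ0 x)
    have key : (P x - Q x) ^ 2 / (P x + Q x) ≤
        2 * (Real.sqrt (P x) - Real.sqrt (Q x)) ^ 2 := by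
      refine div_le_of_le_mul₀ (add_nonneg (hP0 x) (hQ0 x)) (by positivity) ?_
      generalize Real.sqrt (P x) = a at *
      generalize Real.sqrt (Q x) = b at *
      rw [← ha, ← hb]
      have : 0 ≤ ((a - b) ^ 2) ^ 2 := by positivity
      nlinarith
    simp only
    linarith
  refine ⟨hfirst, fun T hT hTP hTQ => ?_⟩
  have hint : ∀ R : α → ℝ, Measurable R → (∀ x, 0 ≤ R x) → Integrable R ν →
      Integrable (fun x => T x ^ 2 * R x) ν → Integrable (fun x => T x * R x) ν := by
    intro R hm h0 hi hTi
    refine (hTi.add hi).mono' (hT.mul hm).aestronglyMeasurable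
      (Filter.Eventually.of_forall fun x => ?_)
    simp only [Pi.add_apply]
    rw [Real.norm_eq_abs, abs_mul, abs_of_nonneg (h0 x), ← sq_abs]
    nlinarith [mul_nonneg (sq_nonneg (|T x| - 1)) (h0 x), mul_nonneg (abs_nonneg (T x)) (h0 x)]
  have hP' := hint P hPmeas hP0 hPint hTP
  have hQ' := hint Q hQmeas hQ0 hQint hTQ
  have hc : ∀ c : ℝ, 2 * c * ((∫ x, T x * P x ∂ν) - ∫ x, T x * Q x ∂ν) ≤
      c ^ 2 * ((∫ x, T x ^ 2 * P x ∂ν) + ∫ x, T x ^ 2 * Q x ∂ν) +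
        ∫ x, (P x - Q x) ^ 2 / (P x + Q x) ∂ν := by
    intro c
    have hA : Integrable (fun x => c ^ 2 * (T x ^ 2 * P x + T x ^ 2 * Q x)) ν :=
      (hTP.add hTQ).const_mul _
    rw [← integral_sub hP' hQ', ← integral_add hTP hTQ, ← integral_const_mul,
      ← integral_const_mul, ← integral_add hA hJi]
    refine integral_mono ((hP'.sub hQ').const_mul _)
      (hA.add hJi) fun x => ?_
    simp only [Pi.add_apply, Pi.sub_apply]
    rcases (add_nonneg (hP0 x) (hQ0 x)).eq_or_lt with h | h
    · have h1 : P x = 0 := by linarith [hP0 x, hQ0 x]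
      have h2 : Q x = 0 := by linarith [hP0 x, hQ0 x]
      simp [h1, h2]
    · have h3 : 0 ≤ (c * T x * (P x + Q x) - (P x - Q x)) ^ 2 / (P x + Q x) := by positivity
      have h4 : (c * T x * (P x + Q x) - (P x - Q x)) ^ 2 / (P x + Q x) =
          c ^ 2 * (T x ^ 2 * P x + T x ^ 2 * Q x) + (P x - Q x) ^ 2 / (P x + Q x)
            - 2 * c * (T x * P x - T x * Q x) := by
        field_simp
        ring
      linarith
  have hH0 : 0 ≤ ∫ x, (Real.sqrt (P x) - Real.sqrt (Q x)) ^ 2 ∂ν :=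
    integral_nonneg fun x => sq_nonneg _
  have hS0 : 0 ≤ (∫ x, T x ^ 2 * P x ∂ν) + ∫ x, T x ^ 2 * Q x ∂ν :=
    add_nonneg (integral_nonneg fun x => mul_nonneg (sq_nonneg _) (hP0 x))
      (integral_nonneg fun x => mul_nonneg (sq_nonneg _) (hQ0 x))
  generalize (∫ x, T x ^ 2 * P x ∂ν) + ∫ x, T x ^ 2 * Q x ∂ν = S at *
  generalize (∫ x, T x * P x ∂ν) - ∫ x, T x * Q x ∂ν = D at *
  rcases hS0.eq_or_lt with h | h
  · rw [← h, div_zero]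
    exact hH0
  · have h1 := hc (D / S)
    have h2 : 2 * (D / S) * D - (D / S) ^ 2 * S = D ^ 2 / S := by
      field_simp
      ring
    have h3 : 1 / 2 * D ^ 2 / S = 1 / 2 * (D ^ 2 / S) := by ring
    rw [h3]
    linarith
end

section
/- Let m ∈ ℕ, let x_1,…,x_m be nonzero real numbers with pairwise distinct absolute values, and let σ_1,…,σ_m be pairwise distinct positive reals. Then the m×m matrix B with entries B_{ij} = φ(x_i/σ_j), where φ is the standard normal density, is nonsingular. -/
theorem expsum_aux {ι : Type*} [DecidableEq ι] (e : ι → ℝ) (he : Function.Injective e) (n : ℕ) :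
    ∀ (S : Finset ι) (c : ι → ℝ) (y : Fin n → ℝ), S.card = n → StrictMono y →
      (∀ i, ∑ a ∈ S, c a * Real.exp (e a * y i) = 0) → ∀ a ∈ S, c a = 0 := by
  induction n with
  | zero =>
    intro S c y hS _ _ a ha
    rw [Finset.card_eq_zero] at hS
    simp [hS] at ha
  | succ n ih =>
    intro S c y hS hy h
    obtain ⟨b, hb⟩ : S.Nonempty := by
      rw [← Finset.card_pos]; omega
    have hder : ∀ t : ℝ, HasDerivAt (fun t => ∑ a ∈ S, c a * Real.exp ((e a - e b) * t))
        (∑ a ∈ S, c a * (Real.exp ((e a - e b) * t) * ((e a - e b) * 1))) t := by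
      intro t
      apply HasDerivAt.fun_sum
      intro a _
      exact (((hasDerivAt_id t).const_mul (e a - e b)).exp).const_mul (c a)
    have hg : ∀ i, ∑ a ∈ S, c a * Real.exp ((e a - e b) * y i) = 0 := by
      intro i
      have := congrArg (fun r => r * Real.exp (-(e b * y i))) (h i)
      simp only [zero_mul, Finset.sum_mul] at this
      rw [← this]
      refine Finset.sum_congr rfl fun a _ => ?_
      rw [mul_assoc, ← Real.exp_add]
      ring_nf
    have hz : ∀ i : Fin n, ∃ z, z ∈ Set.Ioo (y i.castSucc) (y i.succ) ∧
        ∑ a ∈ S, c a * (Real.exp ((e a - e b) * z) * ((e a - e b) * 1)) = 0 := by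
      intro i
      obtain ⟨z, hz, hz0⟩ := exists_hasDerivAt_eq_zero (hy (Fin.castSucc_lt_succ (i := i)))
        (fun t _ => (hder t).continuousAt.continuousWithinAt)
        ((hg i.castSucc).trans (hg i.succ).symm) (fun t _ => hder t)
      exact ⟨z, hz, hz0⟩
    choose z hzI hz0 using hz
    have hzm : StrictMono z := by
      intro i j hij
      have h1 : y i.succ ≤ y j.castSucc := hy.monotone (by
        rw [Fin.le_def]; simp only [Fin.val_succ, Fin.val_castSucc]; exact hij)
      exact ((hzI i).2.trans_le h1).trans (hzI j).1
    have key := ih (S.erase b) (fun a => c a * (e a - e b)) z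
      (by rw [Finset.card_erase_of_mem hb, hS]; rfl) hzm (by
        intro i
        have := congrArg (fun r => r * Real.exp (e b * z i)) (hz0 i)
        simp only [zero_mul, Finset.sum_mul] at this
        rw [Finset.sum_erase _ (by simp), ← this]
        refine Finset.sum_congr rfl fun a _ => ?_
        have : Real.exp (e a * z i) = Real.exp ((e a - e b) * z i) * Real.exp (e b * z i) := by
          rw [← Real.exp_add]; ring_nf
        rw [this]; ring)
    have hne : ∀ a ∈ S, a ≠ b → c a = 0 := by
      intro a ha hab
      have := key a (Finset.mem_erase.2 ⟨hab, ha⟩)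
      rcases mul_eq_zero.1 this with h | h
      · exact h
      · exact absurd (he (sub_eq_zero.1 h)) hab
    intro a ha
    by_cases hab : a = b
    · subst hab
      have h0 := h 0
      rw [Finset.sum_eq_single_of_mem a ha (fun d hd hda => by rw [hne d hd hda, zero_mul])] at h0
      exact (mul_eq_zero.1 h0).resolve_right (Real.exp_ne_zero _)
    · exact hne a ha hab

/-- from the proof of Lemma 11. If `x₁, …, x_m` are nonzero reals with
pairwise distinct absolute values and `σ₁, …, σ_m` are pairwise distinct positive reals,
then the matrix `B` with `B i j = φ(x i / σ j)` is nonsingular. -/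
theorem stmt18 (m : ℕ) (x σ : Fin m → ℝ)
    (hx : ∀ i, x i ≠ 0)
    (habs : ∀ i j, |x i| = |x j| → i = j)
    (hσpos : ∀ j, 0 < σ j)
    (hσinj : Function.Injective σ) :
    (Matrix.of fun i j : Fin m => stdNormalPDF (x i / σ j)).det ≠ 0 := by
  intro hdet
  obtain ⟨v, hv, hMv⟩ := Matrix.exists_mulVec_eq_zero_iff.2 hdet
  apply hv
  have he : Function.Injective (fun j => (σ j ^ 2)⁻¹) := by
    intro i j hij
    have h2 : σ i ^ 2 = σ j ^ 2 := inv_injective hij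
    exact hσinj ((pow_left_inj₀ (hσpos i).le (hσpos j).le two_ne_zero).1 h2)
  have hyi : Function.Injective (fun i => -(x i ^ 2) / 2) := by
    intro i j hij
    apply habs
    rw [← sq_eq_sq_iff_abs_eq_abs]
    simp only at hij
    linarith
  have hT : (Finset.univ.image (fun i => -(x i ^ 2) / 2)).card = m := by
    rw [Finset.card_image_of_injective _ hyi]; simp
  have key := expsum_aux _ he m Finset.univ v
    ((Finset.univ.image (fun i => -(x i ^ 2) / 2)).orderEmbOfFin hT) (by simp)
    (OrderEmbedding.strictMono _) (by
      intro k
      have hk := Finset.orderEmbOfFin_mem _ hT k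
      obtain ⟨i, -, hi⟩ := Finset.mem_image.1 hk
      rw [← hi]
      have h1 := congrFun hMv i
      simp only [Matrix.mulVec, dotProduct, Matrix.of_apply, Pi.zero_apply, stdNormalPDF] at h1
      have h2 := congrArg (fun r => r * Real.sqrt (2 * Real.pi)) h1
      simp only [zero_mul, Finset.sum_mul] at h2
      rw [← h2]
      refine Finset.sum_congr rfl fun j _ => ?_
      have hs : Real.sqrt (2 * Real.pi) ≠ 0 := (Real.sqrt_pos.2 (by positivity)).ne'
      have h3 : -(x i / σ j) ^ 2 / 2 = (σ j ^ 2)⁻¹ * (-(x i ^ 2) / 2) := by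
        rw [div_pow]; ring
      rw [h3]
      field_simp)
  funext j
  exact key j (Finset.mem_univ j)
end

section
/- There is a universal constant c > 0 such that the following holds. Let p ∈ (0,1), t ≥ 3p, μ > 0, and let G = p·δ_1 + (1−p)·δ_s with s = cμ/√t. Then H²( f_{−μ,G}, f_{μ,G} ) ≤ 2p + (1−p)·H²( N(−μ, c²μ²/t), N(μ, c²μ²/t) ) ≤ t. Consequently, the Hellinger modulus of continuity satisfies ω_{H²,G}(t) = ∞ when t ≥ 3p, so the restriction t = O(p) in the modulus bound for subset-of-signals priors is necessary. -/
open MeasureTheory ProbabilityTheory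
open scoped ENNReal NNReal

lemma aux_pdf (m s x : ℝ) (hs : 0 < s) :
    (1 / s) * stdNormalPDF ((x - m) / s) = gaussianPDFReal m (Real.toNNReal (s ^ 2)) x := by
  unfold stdNormalPDF gaussianPDFReal
  rw [Real.coe_toNNReal _ (by positivity), Real.sqrt_mul (by positivity) (s ^ 2),
    Real.sqrt_sq hs.le]
  have : -((x - m) / s) ^ 2 / 2 = -(x - m) ^ 2 / (2 * s ^ 2) := by
    field_simp
  rw [this, mul_inv]
  ring

lemma aux_mix (m p s x : ℝ) (hp0 : 0 < p) (hp1 : p < 1) (hs : 0 < s) :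
    mixDensity m (ENNReal.ofReal p • Measure.dirac 1 +
      ENNReal.ofReal (1 - p) • Measure.dirac s) x =
    p * gaussianPDFReal m 1 x + (1 - p) * gaussianPDFReal m (Real.toNNReal (s ^ 2)) x := by
  unfold mixDensity
  have hi : ∀ a : ℝ, Integrable (fun σ : ℝ => (1 / σ) * stdNormalPDF ((x - m) / σ))
      (Measure.dirac a) := fun a => integrable_dirac enorm_lt_top
  rw [integral_add_measure ((hi _).smul_measure (by simp)) ((hi _).smul_measure (by simp)),
    integral_smul_measure, integral_smul_measure, integral_dirac, integral_dirac,
    aux_pdf _ _ _ one_pos, aux_pdf _ _ _ hs, ENNReal.toReal_ofReal hp0.le,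
    ENNReal.toReal_ofReal (by linarith)]
  simp

lemma aux_prod (μ s x : ℝ) (hs : 0 < s) :
    gaussianPDFReal (-μ) (Real.toNNReal (s ^ 2)) x * gaussianPDFReal μ (Real.toNNReal (s ^ 2)) x
     = (gaussianPDFReal 0 (Real.toNNReal (s ^ 2)) x * Real.exp (-μ ^ 2 / (2 * s ^ 2))) ^ 2 := by
  unfold gaussianPDFReal
  rw [Real.coe_toNNReal _ (by positivity)]
  have : Real.exp (-(x - -μ) ^ 2 / (2 * s ^ 2)) * Real.exp (-(x - μ) ^ 2 / (2 * s ^ 2)) =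
     (Real.exp (-(x - 0) ^ 2 / (2 * s ^ 2)) * Real.exp (-μ ^ 2 / (2 * s ^ 2))) ^ 2 := by
    rw [← Real.exp_add, ← Real.exp_add, ← Real.exp_nat_mul]
    congr 1
    push_cast
    field_simp
    ring
  linear_combination (√(2 * Real.pi * s ^ 2))⁻¹ ^ 2 * this

lemma aux_pt (a a' b b' r : ℝ) (ha : 0 ≤ a) (ha' : 0 ≤ a') (hb : 0 ≤ b) (hb' : 0 ≤ b')
    (hr : 0 ≤ r) (h : b * b' = r ^ 2) :
    (Real.sqrt (a + b) - Real.sqrt (a' + b')) ^ 2 ≤ a + a' + b + b' - 2 * r := by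
  have h1 : r ≤ Real.sqrt (a + b) * Real.sqrt (a' + b') := by
    rw [← Real.sqrt_mul (by positivity)]
    apply Real.le_sqrt_of_sq_le
    rw [← h]
    nlinarith [mul_nonneg ha ha', mul_nonneg ha hb', mul_nonneg hb ha']
  nlinarith [Real.sq_sqrt (add_nonneg ha hb), Real.sq_sqrt (add_nonneg ha' hb')]

lemma aux_hell (μ p s : ℝ) (hp0 : 0 < p) (hp1 : p < 1) (hs : 0 < s) :
    hellingerSq
      (mixDensity (-μ) (ENNReal.ofReal p • Measure.dirac 1 +
        ENNReal.ofReal (1 - p) • Measure.dirac s))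
      (mixDensity μ (ENNReal.ofReal p • Measure.dirac 1 +
        ENNReal.ofReal (1 - p) • Measure.dirac s)) ≤
    2 * p + (1 - p) * (2 - 2 * Real.exp (-μ ^ 2 / (2 * s ^ 2))) := by
  unfold hellingerSq
  simp only [aux_mix _ p s _ hp0 hp1 hs]
  set v := Real.toNNReal (s ^ 2) with hv
  have hv0 : v ≠ 0 := by
    have : 0 < v := Real.toNNReal_pos.2 (by positivity)
    exact this.ne'
  set e := Real.exp (-μ ^ 2 / (2 * s ^ 2)) with he
  have hI : ∀ m w, Integrable (gaussianPDFReal m w) := integrable_gaussianPDFReal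
  have h1 := ((hI (-μ) 1).const_mul p)
  have h2 := ((hI μ 1).const_mul p)
  have h3 := ((hI (-μ) v).const_mul (1 - p))
  have h4 := ((hI μ v).const_mul (1 - p))
  have h5 := ((hI 0 v).const_mul (2 * ((1 - p) * e)))
  have hp1' : 0 ≤ 1 - p := by linarith
  have hg := gaussianPDFReal_nonneg
  calc _ ≤ ∫ x, (p * gaussianPDFReal (-μ) 1 x + p * gaussianPDFReal μ 1 x +
          (1 - p) * gaussianPDFReal (-μ) v x + (1 - p) * gaussianPDFReal μ v x -
          2 * ((1 - p) * e) * gaussianPDFReal 0 v x) := by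
        apply integral_mono_of_nonneg
        · exact Filter.Eventually.of_forall fun x => sq_nonneg _
        · exact (((h1.add h2).add h3).add h4).sub h5
        · refine Filter.Eventually.of_forall fun x => ?_
          have := aux_pt (p * gaussianPDFReal (-μ) 1 x) (p * gaussianPDFReal μ 1 x)
            ((1 - p) * gaussianPDFReal (-μ) v x) ((1 - p) * gaussianPDFReal μ v x)
            ((1 - p) * (gaussianPDFReal 0 v x * e))
            (mul_nonneg hp0.le (hg _ _ _)) (mul_nonneg hp0.le (hg _ _ _))
            (mul_nonneg hp1' (hg _ _ _)) (mul_nonneg hp1' (hg _ _ _))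
            (mul_nonneg hp1' (mul_nonneg (hg _ _ _) (Real.exp_pos _).le))
            (by linear_combination (1 - p) ^ 2 * aux_prod μ s x hs)
          refine this.trans (le_of_eq ?_)
          ring
    _ = _ := by
        rw [integral_sub (by exact ((h1.add h2).add h3).add h4) h5,
          integral_add (by exact (h1.add h2).add h3) h4,
          integral_add (by exact h1.add h2) h3, integral_add h1 h2]
        simp only [integral_const_mul, integral_gaussianPDFReal_eq_one _ one_ne_zero,
          integral_gaussianPDFReal_eq_one _ hv0]
        ring

/-- necessity of `t = O(p)` for the modulus bound. For the two-point
prior `G = p δ₁ + (1-p) δ_{cμ/√t}` with a suitable universal constant `c > 0` and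
`t ≥ 3p`, one has
`H²(f_{-μ,G}, f_{μ,G}) ≤ 2p + (1-p) H²(N(-μ, c²μ²/t), N(μ, c²μ²/t)) ≤ t`
(using `H²(N(-μ,σ²), N(μ,σ²)) = 2 - 2 exp(-(2μ)²/(8σ²))`); consequently the Hellinger
modulus of continuity at `t` is infinite over subset-of-signals priors with mass `≥ p`
on `[0,1]`. -/
theorem stmt19 :
    ∃ c : ℝ, 0 < c ∧
      ∀ p t μ : ℝ, p ∈ Set.Ioo (0 : ℝ) 1 → 3 * p ≤ t → 0 < μ →
        (hellingerSq
            (mixDensity (-μ)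
              (ENNReal.ofReal p • Measure.dirac 1 +
                ENNReal.ofReal (1 - p) • Measure.dirac (c * μ / Real.sqrt t)))
            (mixDensity μ
              (ENNReal.ofReal p • Measure.dirac 1 +
                ENNReal.ofReal (1 - p) • Measure.dirac (c * μ / Real.sqrt t))) ≤
          2 * p + (1 - p) *
            (2 - 2 * Real.exp (-(2 * μ) ^ 2 / (8 * (c ^ 2 * μ ^ 2 / t))))) ∧
        (2 * p + (1 - p) *
            (2 - 2 * Real.exp (-(2 * μ) ^ 2 / (8 * (c ^ 2 * μ ^ 2 / t)))) ≤ t) ∧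
        (⨆ (G : Measure ℝ) (_ : IsProbabilityMeasure G) (_ : G (Set.Iio 0) = 0)
            (_ : ENNReal.ofReal p ≤ G (Set.Icc 0 1)), modulusEnn G t) = ⊤ := by
  have key : ∀ p t μ : ℝ, p ∈ Set.Ioo (0 : ℝ) 1 → 3 * p ≤ t → 0 < μ →
        (hellingerSq
            (mixDensity (-μ)
              (ENNReal.ofReal p • Measure.dirac 1 +
                ENNReal.ofReal (1 - p) • Measure.dirac (2 * μ / Real.sqrt t)))
            (mixDensity μ
              (ENNReal.ofReal p • Measure.dirac 1 +
                ENNReal.ofReal (1 - p) • Measure.dirac (2 * μ / Real.sqrt t))) ≤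
          2 * p + (1 - p) *
            (2 - 2 * Real.exp (-(2 * μ) ^ 2 / (8 * (2 ^ 2 * μ ^ 2 / t))))) ∧
        (2 * p + (1 - p) *
            (2 - 2 * Real.exp (-(2 * μ) ^ 2 / (8 * (2 ^ 2 * μ ^ 2 / t)))) ≤ t) := by
    rintro p t μ ⟨hp0, hp1⟩ ht hμ
    have ht0 : 0 < t := by linarith
    have hst : 0 < Real.sqrt t := Real.sqrt_pos.2 ht0
    constructor
    · have := aux_hell μ p (2 * μ / Real.sqrt t) hp0 hp1 (by positivity)
      refine this.trans (le_of_eq ?_)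
      rw [div_pow, Real.sq_sqrt ht0.le]
      congr 5
      field_simp
      ring
    · have h1 : -(2 * μ) ^ 2 / (8 * (2 ^ 2 * μ ^ 2 / t)) = - (t / 8) := by
        field_simp
      rw [h1]
      have := Real.add_one_le_exp (-(t / 8))
      nlinarith [mul_nonneg (sub_nonneg.2 hp1.le) (sub_nonneg.2 this), mul_pos hp0 ht0]
  refine ⟨2, two_pos, fun p t μ hp ht hμ => ⟨(key p t μ hp ht hμ).1, (key p t μ hp ht hμ).2, ?_⟩⟩
  clear hμ μ
  apply ENNReal.eq_top_of_forall_nnreal_le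
  intro r
  have hμ : (0 : ℝ) < r + 1 := by positivity
  obtain ⟨k1, k2⟩ := key p t (r + 1) hp ht hμ
  have ht0 : 0 < t := by linarith [hp.1]
  have hs : 0 < 2 * ((r : ℝ) + 1) / Real.sqrt t := div_pos (by positivity) (Real.sqrt_pos.2 ht0)
  set s := 2 * ((r : ℝ) + 1) / Real.sqrt t with hsdef
  have hprob : IsProbabilityMeasure (ENNReal.ofReal p • Measure.dirac (1 : ℝ) +
      ENNReal.ofReal (1 - p) • Measure.dirac s) := by
    constructor
    simp only [Measure.add_apply, Measure.smul_apply, measure_univ, smul_eq_mul, mul_one]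
    rw [← ENNReal.ofReal_add hp.1.le (by linarith [hp.2])]
    simp
  have hneg : (ENNReal.ofReal p • Measure.dirac (1 : ℝ) +
      ENNReal.ofReal (1 - p) • Measure.dirac s) (Set.Iio 0) = 0 := by
    simp [Measure.dirac_apply' _ measurableSet_Iio, hs.le, Set.indicator]
  have hmass : ENNReal.ofReal p ≤ (ENNReal.ofReal p • Measure.dirac (1 : ℝ) +
      ENNReal.ofReal (1 - p) • Measure.dirac s) (Set.Icc 0 1) := by
    simp [Measure.dirac_apply' _ measurableSet_Icc]
  refine le_iSup_of_le _ (le_iSup_of_le hprob (le_iSup_of_le hneg (le_iSup_of_le hmass ?_)))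
  unfold modulusEnn
  refine le_iSup_of_le (-((r : ℝ) + 1)) (le_iSup_of_le ((r : ℝ) + 1)
    (le_iSup_of_le (k1.trans k2) ?_))
  rw [← ENNReal.ofReal_coe_nnreal]
  apply ENNReal.ofReal_le_ofReal
  rw [abs_sub_comm]
  refine le_trans ?_ (le_abs_self _)
  have := r.coe_nonneg
  linarith
end
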